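/- arXiv:2108.00287 — 2 statements merged into one kernel-verified Lean document; each statement's English description precedes it below -/
import Mathlib

section
/- Let k be a positive integer and suppose θ ∈ ℂ is algebraic of degree d over ℚ with 2 ≤ d < k. Then for every ε > 0 there exists a constant C > 0 (depending on k, ε and θ) such that for all real X ≥ 2, the number of 2k-tuples of integers (x₁,…,x_k,y₁,…,y_k) with 1 ≤ x_i, y_i ≤ X for all i, satisfying (x₁+θ)⋯(x_k+θ) = (y₁+θ)⋯(y_k+θ), and such that (y₁,…,y_k) is NOT a permutation of (x₁,…,x_k), is at most C·X^{k−d+1+ε}. -/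
namespace Paucity

open Polynomial

lemma divisor_bound (δ : ℝ) (hδ : 0 < δ) :
    ∃ C : ℝ, 1 ≤ C ∧ ∀ n : ℕ, n ≠ 0 → (n.divisors.card : ℝ) ≤ C * (n : ℝ) ^ δ := by
  set B : ℕ := ⌈(2 : ℝ) ^ (1 / δ)⌉₊ with hB
  set K : ℝ := 1 + 2 / δ with hK
  have hK1 : 1 ≤ K := by rw [hK]; have : 0 < 2 / δ := by positivity
                         linarith
  refine ⟨K ^ B, one_le_pow₀ hK1, fun n hn => ?_⟩
  have key : ∀ p : ℕ, 2 ≤ p → ∀ e : ℕ,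
      ((e : ℝ) + 1) ≤ (if p < B then K else 1) * ((p : ℝ) ^ e) ^ δ := by
    intro p hp e
    have hp' : (2 : ℝ) ≤ p := by exact_mod_cast hp
    have hsw : ((p : ℝ) ^ e) ^ δ = ((p : ℝ) ^ δ) ^ e := by
      rw [← Real.rpow_natCast, ← Real.rpow_natCast, ← Real.rpow_mul (by positivity),
        ← Real.rpow_mul (by positivity), mul_comm]
    rw [hsw]
    split_ifs with h
    · have h1 : 1 + δ / 2 ≤ (p : ℝ) ^ δ := by
        have h2 : (2 : ℝ) ^ δ ≤ (p : ℝ) ^ δ := Real.rpow_le_rpow (by norm_num) hp' hδ.le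
        have h3 : (2 : ℝ) ^ δ = Real.exp (Real.log 2 * δ) := Real.rpow_def_of_pos (by norm_num) δ
        have h4 := Real.add_one_le_exp (Real.log 2 * δ)
        have h5 := Real.log_two_gt_d9
        nlinarith
      have h2 : 1 + (e : ℝ) * (δ / 2) ≤ ((p : ℝ) ^ δ) ^ e :=
        (one_add_mul_le_pow (by linarith) e).trans (pow_le_pow_left₀ (by positivity) h1 e)
      have h3 : (e : ℝ) + 1 ≤ K * (1 + (e : ℝ) * (δ / 2)) := by
        have : K * (1 + (e : ℝ) * (δ / 2)) = 1 + e + e * (δ / 2) + 2 / δ := by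
          rw [hK]; field_simp; ring
        rw [this]
        have : 0 ≤ e * (δ / 2) + 2 / δ := by positivity
        linarith
      exact h3.trans (mul_le_mul_of_nonneg_left h2 (by linarith))
    · have h1 : (2 : ℝ) ≤ (p : ℝ) ^ δ := by
        have h2 : (2 : ℝ) ^ (1 / δ) ≤ p := (Nat.le_ceil _).trans (by exact_mod_cast not_lt.mp h)
        calc (2 : ℝ) = ((2 : ℝ) ^ (1 / δ)) ^ δ := by
              rw [← Real.rpow_mul (by norm_num)]; field_simp; simp
          _ ≤ _ := Real.rpow_le_rpow (by positivity) h2 hδ.le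
      rw [one_mul]
      refine le_trans ?_ (pow_le_pow_left₀ (by norm_num) h1 e)
      have : e + 1 ≤ 2 ^ e := Nat.lt_two_pow_self
      exact_mod_cast this
  rw [Nat.card_divisors hn]
  push_cast
  calc ∏ p ∈ n.primeFactors, ((n.factorization p : ℝ) + 1)
      ≤ ∏ p ∈ n.primeFactors, ((if p < B then K else 1) * ((p : ℝ) ^ n.factorization p) ^ δ) := by
        refine Finset.prod_le_prod (fun _ _ => by positivity) fun p hp => ?_
        exact key p (Nat.prime_of_mem_primeFactors hp).two_le _
    _ = (∏ p ∈ n.primeFactors, (if p < B then K else 1)) * (n : ℝ) ^ δ := by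
        rw [Finset.prod_mul_distrib, Real.finsetProd_rpow _ _ (fun _ _ => by positivity)]
        congr 2
        conv_rhs => rw [← Nat.prod_factorization_pow_eq_self hn]
        rw [Finsupp.prod]
        push_cast
        rfl
    _ ≤ _ := by
        refine mul_le_mul_of_nonneg_right ?_ (by positivity)
        rw [Finset.prod_ite, Finset.prod_const, Finset.prod_const_one, mul_one]
        refine pow_le_pow_right₀ hK1 ?_
        calc _ ≤ (Finset.range B).card := Finset.card_le_card (by
              intro p hp; simp at hp ⊢; exact hp.2)
          _ = B := by simp

lemma divisor_bound' (ε : ℝ) (hε : 0 < ε) (A : ℝ) (hA : 1 ≤ A) (a k : ℕ) :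
    ∃ C : ℝ, 0 < C ∧ ∀ N : ℕ, 1 ≤ N → ∀ m : ℕ, m ≠ 0 → (m : ℝ) ≤ A * (N : ℝ) ^ a →
      (m.divisors.card : ℝ) ^ k ≤ C * (N : ℝ) ^ ε := by
  have hδ : 0 < ε / (a * k + 1) := by positivity
  obtain ⟨C, hC, h⟩ := divisor_bound (ε / (a * k + 1)) hδ
  set δ := ε / (a * k + 1) with hd
  refine ⟨(C * A ^ δ) ^ k, by positivity, fun N hN m hm hmA => ?_⟩
  have hN' : (1 : ℝ) ≤ N := by exact_mod_cast hN
  have h1 : (m.divisors.card : ℝ) ≤ C * A ^ δ * (N : ℝ) ^ (a * δ) := by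
    refine (h m hm).trans ?_
    rw [mul_assoc]
    refine mul_le_mul_of_nonneg_left ?_ (by linarith)
    refine (Real.rpow_le_rpow (by positivity) hmA hδ.le).trans ?_
    rw [Real.mul_rpow (by positivity) (by positivity), Real.rpow_mul (by positivity),
      Real.rpow_natCast]
  refine (pow_le_pow_left₀ (by positivity) h1 k).trans ?_
  rw [mul_pow]
  refine mul_le_mul_of_nonneg_left ?_ (by positivity)
  rw [← Real.rpow_natCast, ← Real.rpow_mul (by positivity)]
  refine Real.rpow_le_rpow_of_exponent_le hN' ?_
  have : δ * (a * k + 1) = ε := by rw [hd]; field_simp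
  nlinarith

lemma exists_factor {k : ℕ} : ∀ (z : Fin k → ℕ) (M : ℕ), M ∣ ∏ i, z i →
    ∃ g : Fin k → ℕ, ∏ i, g i = M ∧ ∀ i, g i ∣ z i := by
  induction k with
  | zero => intro z M h; exact ⟨z, by simp at h ⊢; omega, fun i => dvd_rfl⟩
  | succ k ih =>
    intro z M h
    rw [Fin.prod_univ_succ] at h
    obtain ⟨a, b, ha, hb, rfl⟩ := exists_dvd_and_dvd_of_dvd_mul h
    obtain ⟨g, hg, hg'⟩ := ih _ _ hb
    refine ⟨Fin.cons a g, by simp [Fin.prod_univ_succ, hg], fun i => ?_⟩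
    refine Fin.cases ?_ (fun j => ?_) i
    · simpa using ha
    · simpa using hg' j

lemma count_dvd (k Y M : ℕ) (hM : M ≠ 0) :
    ((Fintype.piFinset fun _ : Fin k => Finset.Icc 1 Y).filter (fun z => M ∣ ∏ i, z i)).card * M
      ≤ M.divisors.card ^ k * Y ^ k := by
  classical
  set G := (Fintype.piFinset fun _ : Fin k => M.divisors).filter (fun g => ∏ i, g i = M)
  have hsub : (Fintype.piFinset fun _ : Fin k => Finset.Icc 1 Y).filter (fun z => M ∣ ∏ i, z i)
      ⊆ G.biUnion (fun g => Fintype.piFinset fun i => (Finset.Icc 1 Y).filter (fun e => g i ∣ e)) := by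
    intro z hz
    rw [Finset.mem_filter, Fintype.mem_piFinset] at hz
    obtain ⟨g, hg, hg'⟩ := exists_factor z M hz.2
    simp only [Finset.mem_biUnion, Fintype.mem_piFinset, Finset.mem_filter, G]
    refine ⟨g, ⟨fun i => ?_, hg⟩, fun i => ⟨hz.1 i, hg' i⟩⟩
    rw [Nat.mem_divisors]
    exact ⟨hg ▸ Finset.dvd_prod_of_mem g (Finset.mem_univ i), hM⟩
  have hcard : ∀ g ∈ G, (Fintype.piFinset fun i =>
      (Finset.Icc 1 Y).filter (fun e => g i ∣ e)).card * M ≤ Y ^ k := by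
    intro g hg
    have hgM : ∏ i, g i = M := (Finset.mem_filter.mp hg).2
    rw [Fintype.card_piFinset]
    nth_rw 1 [← hgM]
    rw [← Finset.prod_mul_distrib]
    calc _ ≤ ∏ _i : Fin k, Y := by
          refine Finset.prod_le_prod' fun i _ => ?_
          have : (Finset.Icc 1 Y).filter (fun e => g i ∣ e)
            = (Finset.range Y.succ).filter (fun e => e ≠ 0 ∧ g i ∣ e) := by
            ext e; simp; omega
          rw [this, Nat.card_multiples']
          exact Nat.div_mul_le_self _ _
      _ = Y ^ k := by simp
  calc _ ≤ (∑ g ∈ G, (Fintype.piFinset fun i =>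
      (Finset.Icc 1 Y).filter (fun e => g i ∣ e)).card) * M :=
        Nat.mul_le_mul_right _ ((Finset.card_le_card hsub).trans Finset.card_biUnion_le)
    _ = ∑ g ∈ G, (Fintype.piFinset fun i =>
      (Finset.Icc 1 Y).filter (fun e => g i ∣ e)).card * M := by rw [Finset.sum_mul]
    _ ≤ ∑ g ∈ G, Y ^ k := Finset.sum_le_sum hcard
    _ = G.card * Y ^ k := by simp
    _ ≤ _ := by
      refine Nat.mul_le_mul_right _ ((Finset.card_filter_le _ _).trans ?_)
      simp

lemma exists_poly (θ : ℂ) (hθ : IsAlgebraic ℚ θ) (d : ℕ) (hd : (minpoly ℚ θ).natDegree = d)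
    (hd2 : 2 ≤ d) : ∃ f : ℤ[X], f.natDegree = d ∧ (∀ n : ℤ, f.eval n ≠ 0) ∧
      ∀ P : ℤ[X], aeval θ P = 0 → f ∣ P := by
  set m := minpoly ℚ θ with hm
  have hirr : Irreducible m := minpoly.irreducible hθ.isIntegral
  set g := IsLocalization.integerNormalization (nonZeroDivisors ℤ) m with hg
  obtain ⟨b, hbm, hb⟩ := IsLocalization.integerNormalization_spec (nonZeroDivisors ℤ) m
  have hb0 : ((b : ℤ) : ℚ) ≠ 0 := by
    have := nonZeroDivisors.ne_zero hbm
    exact_mod_cast this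
  have hg0 : g ≠ 0 := by
    rw [hg, Ne, IsLocalization.integerNormalization_eq_zero_iff le_rfl]
    exact hirr.ne_zero
  have hc0 : ((g.content : ℤ) : ℚ) ≠ 0 := by
    have : g.content ≠ 0 := by rwa [Ne, content_eq_zero_iff]
    exact_mod_cast this
  set f := g.primPart with hf
  have hmap : C ((g.content : ℤ) : ℚ) * f.map (algebraMap ℤ ℚ) = C ((b : ℤ) : ℚ) * m := by
    have h1 : g.map (algebraMap ℤ ℚ) = C ((b : ℤ) : ℚ) * m := by
      rw [hb, ← Polynomial.smul_eq_C_mul]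
      ext i
      simp [Algebra.smul_def]
      try rfl
    rw [← h1]
    conv_rhs => rw [g.eq_C_content_mul_primPart]
    simp [hf]
  have hassoc : Associated (f.map (algebraMap ℤ ℚ)) m := by
    have hu1 : IsUnit (C ((g.content : ℤ) : ℚ)) := by rw [isUnit_C]; exact isUnit_iff_ne_zero.mpr hc0
    have hu2 : IsUnit (C ((b : ℤ) : ℚ)) := by rw [isUnit_C]; exact isUnit_iff_ne_zero.mpr hb0
    have h1 : Associated (C ((g.content : ℤ) : ℚ) * f.map (algebraMap ℤ ℚ))
        (f.map (algebraMap ℤ ℚ)) := associated_unit_mul_left _ _ hu1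
    have h2 : Associated (C ((b : ℤ) : ℚ) * m) m := associated_unit_mul_left _ _ hu2
    rw [hmap] at h1
    exact h1.symm.trans h2
  have hnd : f.natDegree = d := by
    rw [← hd, ← natDegree_eq_of_degree_eq (degree_eq_degree_of_associated hassoc),
      natDegree_map_eq_of_injective (algebraMap ℤ ℚ).injective_int]
  refine ⟨f, hnd, fun n hn => ?_, fun P hP => ?_⟩
  · have h1 : IsRoot (f.map (algebraMap ℤ ℚ)) ((n : ℤ) : ℚ) := by
      have := Polynomial.eval_intCast_map (algebraMap ℤ ℚ) f n
      rw [IsRoot, this]; simp [hn]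
    have h2 := degree_eq_one_of_irreducible_of_root (hassoc.symm.irreducible hirr) h1
    have h3 : m.natDegree = 1 := by
      rw [← natDegree_eq_of_degree_eq (degree_eq_degree_of_associated hassoc)]
      exact natDegree_eq_of_degree_eq_some h2
    omega
  · refine g.isPrimitive_primPart.dvd_of_fraction_map_dvd_fraction_map (K := ℚ) ?_
    refine hassoc.dvd.trans (minpoly.dvd ℚ θ ?_)
    rwa [aeval_map_algebraMap]

lemma poly_bounds (f : ℤ[X]) (hf : ∀ n : ℤ, f.eval n ≠ 0) :
    ∃ A : ℝ, 1 ≤ A ∧ ∀ Y : ℕ, 1 ≤ Y →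
      (((f.eval (-(Y : ℤ))).natAbs : ℝ) ≤ A * (Y : ℝ) ^ f.natDegree ∧
      (Y : ℝ) ^ f.natDegree ≤ A * ((f.eval (-(Y : ℤ))).natAbs : ℝ)) := by
  set F : ℝ[X] := (f.map (algebraMap ℤ ℝ)).comp (-X) with hF
  have hev : ∀ Y : ℕ, F.eval (Y : ℝ) = ((f.eval (-(Y : ℤ)) : ℤ) : ℝ) := by
    intro Y
    have := Polynomial.eval_intCast_map (algebraMap ℤ ℝ) f (-(Y : ℤ))
    simp [hF] at this ⊢
    exact this
  have hf0 : f ≠ 0 := by rintro rfl; exact hf 0 (by simp)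
  have hdeg : F.degree = (X ^ f.natDegree : ℝ[X]).degree := by
    rw [hF, degree_comp_neg_X, degree_X_pow,
      degree_map_eq_of_injective (algebraMap ℤ ℝ).injective_int, degree_eq_natDegree hf0]
  have h1 := (isBigO_atTop_of_degree_le F _ hdeg.le).comp_tendsto
    (tendsto_natCast_atTop_atTop (R := ℝ))
  have h2 := (isBigO_atTop_of_degree_le _ F hdeg.ge).comp_tendsto
    (tendsto_natCast_atTop_atTop (R := ℝ))
  obtain ⟨C1, hC1, hb1⟩ := Asymptotics.bound_of_isBigO_nat_atTop h1
  obtain ⟨C2, hC2, hb2⟩ := Asymptotics.bound_of_isBigO_nat_atTop h2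
  have hnorm : ∀ Y : ℕ, ‖F.eval (Y : ℝ)‖ = ((f.eval (-(Y : ℤ))).natAbs : ℝ) := by
    intro Y
    rw [hev, Nat.cast_natAbs, Real.norm_eq_abs]; push_cast; rfl
  refine ⟨max 1 (max C1 C2), le_max_left _ _, fun Y hY => ?_⟩
  have hY0 : (Y : ℝ) ≠ 0 := by positivity
  constructor
  · have := hb1 (x := Y) (by simp [hY0]; try omega)
    simp only [Function.comp, hnorm] at this
    refine this.trans ?_
    simp only [eval_pow, eval_X, norm_pow, Real.norm_natCast]
    exact mul_le_mul_of_nonneg_right ((le_max_left _ _).trans (le_max_right _ _)) (by positivity)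
  · have := hb2 (x := Y) (by simp [hev, hf])
    simp only [Function.comp, hnorm] at this
    simp only [eval_pow, eval_X, norm_pow, Real.norm_natCast] at this
    refine this.trans ?_
    exact mul_le_mul_of_nonneg_right ((le_max_right _ _).trans (le_max_right _ _)) (by positivity)

noncomputable def PP {k : ℕ} (x : Fin k → ℕ) : ℤ[X] := ∏ i, (X + C (x i : ℤ))

lemma PP_aeval {k : ℕ} (x : Fin k → ℕ) (θ : ℂ) : aeval θ (PP x) = ∏ i, ((x i : ℂ) + θ) := by
  simp [PP, map_prod, add_comm]

lemma PP_sub_dvd {f : ℤ[X]} {θ : ℂ} (hf : ∀ P : ℤ[X], aeval θ P = 0 → f ∣ P) {k : ℕ}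
    (x y : Fin k → ℕ) (h : ∏ i, ((x i : ℂ) + θ) = ∏ i, ((y i : ℂ) + θ)) : f ∣ PP x - PP y := by
  apply hf
  rw [map_sub, PP_aeval, PP_aeval, h, sub_self]

lemma norm_eq {f : ℤ[X]} {k : ℕ} (x y : Fin k → ℕ) (h : f ∣ PP x - PP y) :
    ∏ i, f.eval (-(x i : ℤ)) = ∏ i, f.eval (-(y i : ℤ)) := by
  set F : ℂ[X] := f.map (algebraMap ℤ ℂ) with hF
  have hr : ∀ r ∈ F.roots, ∏ i, ((x i : ℂ) + r) = ∏ i, ((y i : ℂ) + r) := by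
    intro r hr
    obtain ⟨q, hq⟩ := h
    have h1 := congrArg (aeval r) hq
    have h2 : aeval r f = 0 := by
      rw [← eval_map_algebraMap]; exact isRoot_of_mem_roots hr
    rw [map_sub, PP_aeval, PP_aeval, map_mul, h2, zero_mul, sub_eq_zero] at h1
    exact h1
  have hsp : F.Splits := IsAlgClosed.splits F
  have hev : ∀ z : Fin k → ℕ, ((∏ i, f.eval (-(z i : ℤ)) : ℤ) : ℂ)
      = (F.leadingCoeff * (-1) ^ F.roots.card) ^ k *
        (F.roots.map fun r => ∏ i, ((z i : ℂ) + r)).prod := by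
    intro z
    have h1 : ∀ n : ℕ, ((f.eval (-(n : ℤ)) : ℤ) : ℂ)
        = F.leadingCoeff * (-1) ^ F.roots.card * (F.roots.map fun r => ((n : ℂ) + r)).prod := by
      intro n
      have h2 := Polynomial.eval_intCast_map (algebraMap ℤ ℂ) f (-(n : ℤ))
      have h3 : ((f.eval (-(n : ℤ)) : ℤ) : ℂ) = F.eval (-(n : ℂ)) := by
        rw [hF, show (-(n : ℂ)) = ((-(n : ℤ) : ℤ) : ℂ) by push_cast; rfl, h2]; rfl
      rw [h3, hsp.eval_eq_prod_roots, mul_assoc]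
      congr 1
      rw [← Multiset.card_map (fun r => ((n : ℂ) + r)) F.roots, ← Multiset.prod_map_neg,
        Multiset.map_map]
      congr 1
      refine Multiset.map_congr rfl fun r _ => ?_
      simp; ring
    push_cast
    simp_rw [h1]
    rw [Finset.prod_mul_distrib, Finset.prod_const, Finset.card_univ, Fintype.card_fin,
      ← Multiset.prod_map_prod]
  have : ((∏ i, f.eval (-(x i : ℤ)) : ℤ) : ℂ) = ((∏ i, f.eval (-(y i : ℤ)) : ℤ) : ℂ) := by
    rw [hev, hev]
    congr 2
    exact Multiset.map_congr rfl hr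
  exact_mod_cast this

lemma dvd_at {f : ℤ[X]} {k : ℕ} (x y : Fin k → ℕ) (h : f ∣ PP x - PP y) (j : Fin k)
    (hj : ∀ i, x i < y j) : (f.eval (-(y j : ℤ))).natAbs ∣ ∏ i, (y j - x i) := by
  have h1 : f.eval (-(y j : ℤ)) ∣ (PP x - PP y).eval (-(y j : ℤ)) := by
    obtain ⟨q, hq⟩ := h
    rw [hq, eval_mul]; exact dvd_mul_right _ _
  have h2 : (PP x - PP y).eval (-(y j : ℤ)) = ∏ i, (-(y j : ℤ) + x i) := by
    have : (PP y).eval (-(y j : ℤ)) = 0 := by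
      rw [PP, eval_prod]
      exact Finset.prod_eq_zero (Finset.mem_univ j) (by simp)
    rw [eval_sub, this, sub_zero, PP, eval_prod]
    simp
  rw [h2, ← Int.natAbs_dvd_natAbs] at h1
  convert h1
  rw [← Int.natAbsHom_apply, map_prod]
  refine Finset.prod_congr rfl fun i _ => ?_
  have := hj i
  simp only [Int.natAbsHom_apply]
  omega

lemma deg_lt {f : ℤ[X]} {k : ℕ} (x y : Fin k → ℕ) (h : f ∣ PP x - PP y) (j : Fin k)
    (hj : ∀ i, x i < y j) : f.natDegree < k := by
  have hne : PP x - PP y ≠ 0 := by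
    intro h0
    have h1 : (PP x - PP y).eval (-(y j : ℤ)) = 0 := by rw [h0]; simp
    have : (PP y).eval (-(y j : ℤ)) = 0 := by
      rw [PP, eval_prod]
      exact Finset.prod_eq_zero (Finset.mem_univ j) (by simp)
    rw [eval_sub, this, sub_zero, PP, eval_prod, Finset.prod_eq_zero_iff] at h1
    obtain ⟨i, _, hi⟩ := h1
    have := hj i
    simp at hi
    omega
  have hmon : ∀ z : Fin k → ℕ, (PP z).Monic := fun z =>
    monic_prod_of_monic _ _ fun i _ => monic_X_add_C _
  have hdeg : ∀ z : Fin k → ℕ, (PP z).natDegree = k := by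
    intro z
    rw [PP, natDegree_prod_of_monic _ _ fun i _ => monic_X_add_C _]
    simp only [natDegree_X_add_C]; simp
  have hlt : (PP x - PP y).degree < (PP x).degree := by
    refine degree_sub_lt_left ?_ (hmon x).ne_zero ?_
    · rw [degree_eq_natDegree (hmon x).ne_zero, degree_eq_natDegree (hmon y).ne_zero, hdeg, hdeg]
    · rw [(hmon x).leadingCoeff, (hmon y).leadingCoeff]
  have h2 := natDegree_lt_natDegree hne hlt
  rw [hdeg] at h2
  exact (natDegree_le_of_dvd h hne).trans_lt h2


def box (k N : ℕ) : Finset (Fin k → ℕ) := Fintype.piFinset fun _ => Finset.Icc 1 N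

lemma mem_box {k N : ℕ} {x : Fin k → ℕ} : x ∈ box k N ↔ ∀ i, 1 ≤ x i ∧ x i ≤ N := by
  simp [box]

/-- Few values of the variable make the polynomial value divide a given integer. -/
lemma card_value_dvd (f : ℤ[X]) (hd : 1 ≤ f.natDegree) (N T : ℕ) (hT : T ≠ 0) :
    ((Finset.Icc 1 N).filter (fun v : ℕ => (f.eval (-(v : ℤ))).natAbs ∣ T)).card
      ≤ (2 * f.natDegree) * T.divisors.card := by
  classical
  refine Finset.card_le_mul_card_image_of_maps_to
    (f := fun v : ℕ => (f.eval (-(v : ℤ))).natAbs) (fun v hv => ?_) _ (fun w _ => ?_)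
  · rw [Nat.mem_divisors]; exact ⟨(Finset.mem_filter.mp hv).2, hT⟩
  · have hnd : ∀ c : ℤ, (f - C c).roots.toFinset.card ≤ f.natDegree := by
      intro c
      refine (Multiset.toFinset_card_le _).trans ((card_roots' _).trans ?_)
      rw [natDegree_sub_C]
    have hne : ∀ c : ℤ, f - C c ≠ 0 := by
      intro c h0
      have h1 : (f - C c).natDegree = 0 := by rw [h0]; simp
      rw [natDegree_sub_C] at h1
      omega
    calc _ ≤ ((f - C (w : ℤ)).roots.toFinset ∪ (f - C (-(w : ℤ))).roots.toFinset).card := by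
          refine Finset.card_le_card_of_injOn (fun v : ℕ => -(v : ℤ)) (fun v hv => ?_) ?_
          · have hv' := (Finset.mem_filter.mp (Finset.mem_coe.mp hv)).2
            rw [Finset.mem_coe, Finset.mem_union, Multiset.mem_toFinset, Multiset.mem_toFinset,
              mem_roots (hne _), mem_roots (hne _), IsRoot, IsRoot, eval_sub, eval_sub,
              eval_C, eval_C]
            change f.eval (-(v : ℤ)) - (w : ℤ) = 0 ∨ f.eval (-(v : ℤ)) - (-(w : ℤ)) = 0
            omega
          · intro a _ b _ hab
            simpa using hab
      _ ≤ _ := (Finset.card_union_le _ _).trans (by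
          have := hnd w
          have := hnd (-(w : ℤ))
          omega)

open Classical in
noncomputable def EE (θ : ℂ) (k N : ℕ) : Finset ((Fin k → ℕ) × (Fin k → ℕ)) :=
  (box k N ×ˢ box k N).filter fun p =>
    ∏ i, ((p.1 i : ℂ) + θ) = ∏ i, ((p.2 i : ℂ) + θ) ∧ ∃ j, ∀ i, p.1 i < p.2 j

open Classical in
noncomputable def Sol (θ : ℂ) (k N : ℕ) : Finset ((Fin k → ℕ) × (Fin k → ℕ)) :=
  (box k N ×ˢ box k N).filter fun p =>
    ∏ i, ((p.1 i : ℂ) + θ) = ∏ i, ((p.2 i : ℂ) + θ) ∧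
      ¬ ∃ σ : Equiv.Perm (Fin k), ∀ i, p.2 i = p.1 (σ i)

lemma fiber_bound (θ : ℂ) (f : ℤ[X]) (hd : 1 ≤ f.natDegree) (hf : ∀ n : ℤ, f.eval n ≠ 0)
    (hdvd : ∀ P : ℤ[X], aeval θ P = 0 → f ∣ P) (k : ℕ) (ε : ℝ) (hε : 0 < ε) :
    ∃ C : ℝ, 0 < C ∧ ∀ N : ℕ, 1 ≤ N → ∀ x ∈ box k N, ∀ S : Finset (Fin k → ℕ),
      S ⊆ box k N → (∀ y ∈ S, ∏ i, ((x i : ℂ) + θ) = ∏ i, ((y i : ℂ) + θ)) →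
      (S.card : ℝ) ≤ C * (N : ℝ) ^ ε := by
  classical
  obtain ⟨A, hA, hAb⟩ := poly_bounds f hf
  obtain ⟨C, hC, hCb⟩ := divisor_bound' ε hε (A ^ k) (one_le_pow₀ hA) (f.natDegree * k) k
  refine ⟨(2 * f.natDegree) ^ k * C, by positivity, fun N hN x hx S hS hSx => ?_⟩
  set T : ℕ := ∏ i, (f.eval (-(x i : ℤ))).natAbs with hT
  have hT0 : T ≠ 0 := by
    rw [hT, Finset.prod_ne_zero_iff]
    intro i _
    exact Int.natAbs_ne_zero.mpr (hf _)
  have hTb : (T : ℝ) ≤ A ^ k * (N : ℝ) ^ (f.natDegree * k) := by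
    rw [hT]
    push_cast
    calc _ ≤ ∏ _i : Fin k, (A * (N : ℝ) ^ f.natDegree) := by
          refine Finset.prod_le_prod (fun _ _ => by positivity) fun i _ => ?_
          have hxi := mem_box.mp hx i
          have h1 := (hAb (x i) hxi.1).1
          refine h1.trans (mul_le_mul_of_nonneg_left ?_ (by linarith))
          exact pow_le_pow_left₀ (by positivity) (by exact_mod_cast hxi.2) _
      _ = _ := by simp [mul_pow, pow_mul]
  have hsub : S ⊆ Fintype.piFinset fun _ : Fin k =>
      (Finset.Icc 1 N).filter (fun v : ℕ => (f.eval (-(v : ℤ))).natAbs ∣ T) := by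
    intro y hy
    rw [Fintype.mem_piFinset]
    intro i
    rw [Finset.mem_filter, Finset.mem_Icc]
    refine ⟨mem_box.mp (hS hy) i, ?_⟩
    have h1 := norm_eq x y (PP_sub_dvd hdvd x y (hSx y hy))
    have h2 : T = ∏ i, (f.eval (-(y i : ℤ))).natAbs := by
      have := congrArg Int.natAbsHom h1
      rw [map_prod, map_prod] at this
      exact this
    rw [h2]
    exact Finset.dvd_prod_of_mem (fun i => (f.eval (-(y i : ℤ))).natAbs) (Finset.mem_univ i)
  have h1 : S.card ≤ ((2 * f.natDegree) * T.divisors.card) ^ k := by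
    refine (Finset.card_le_card hsub).trans ?_
    rw [Fintype.card_piFinset, Finset.prod_const, Finset.card_univ, Fintype.card_fin]
    exact Nat.pow_le_pow_left (card_value_dvd f hd N T hT0) k
  have h2 : (S.card : ℝ) ≤ (2 * f.natDegree) ^ k * (T.divisors.card : ℝ) ^ k := by
    rw [← mul_pow]; exact_mod_cast h1
  refine h2.trans ?_
  rw [mul_assoc]
  exact mul_le_mul_of_nonneg_left (hCb N hN T hT0 hTb) (by positivity)

/-- The tuples below `Y` that can occur. -/
noncomputable def AA (f : ℤ[X]) (k Y : ℕ) : Finset (Fin k → ℕ) :=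
  (box k Y).filter fun x => (∀ i, x i < Y) ∧ (f.eval (-(Y : ℤ))).natAbs ∣ ∏ i, (Y - x i)

lemma AA_bound (f : ℤ[X]) (hf : ∀ n : ℤ, f.eval n ≠ 0) (k : ℕ)
    (hk : f.natDegree ≤ k) (ε : ℝ) (hε : 0 < ε) :
    ∃ C : ℝ, 0 < C ∧ ∀ N : ℕ, ∀ Y : ℕ, 1 ≤ Y → Y ≤ N →
      ((AA f k Y).card : ℝ) ≤ C * (N : ℝ) ^ ((k : ℝ) - f.natDegree + ε) := by
  obtain ⟨A, hA, hAb⟩ := poly_bounds f hf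
  obtain ⟨C, hC, hCb⟩ := divisor_bound' ε hε A hA f.natDegree k
  refine ⟨C * A, by positivity, fun N Y hY hYN => ?_⟩
  set M := (f.eval (-(Y : ℤ))).natAbs with hM
  have hM0 : M ≠ 0 := Int.natAbs_ne_zero.mpr (hf _)
  have hY' : (1 : ℝ) ≤ Y := by exact_mod_cast hY
  have h1 : (AA f k Y).card ≤ ((Fintype.piFinset fun _ : Fin k => Finset.Icc 1 Y).filter
      (fun z => M ∣ ∏ i, z i)).card := by
    refine Finset.card_le_card_of_injOn (fun x i => Y - x i) (fun x hx => ?_) ?_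
    · have hx' := Finset.mem_filter.mp (Finset.mem_coe.mp hx)
      rw [Finset.mem_coe, Finset.mem_filter, Fintype.mem_piFinset]
      refine ⟨fun i => ?_, hx'.2.2⟩
      have := hx'.2.1 i
      rw [Finset.mem_Icc]
      change 1 ≤ Y - x i ∧ Y - x i ≤ Y
      omega
    · intro x hx x' hx' h
      have hx := Finset.mem_filter.mp (Finset.mem_coe.mp hx)
      have hx' := Finset.mem_filter.mp (Finset.mem_coe.mp hx')
      funext i
      have h3 := congrFun h i
      have h4 := hx.2.1 i
      have h5 := hx'.2.1 i
      simp only at h3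
      omega
  have h2 := (Nat.mul_le_mul_right M h1).trans (count_dvd k Y M hM0)
  have h3 : ((AA f k Y).card : ℝ) * M ≤ (M.divisors.card : ℝ) ^ k * (Y : ℝ) ^ k := by
    exact_mod_cast h2
  have h4 := hCb Y hY M hM0 (hAb Y hY).1
  have h5 := (hAb Y hY).2
  have h6 : ((AA f k Y).card : ℝ) * (Y : ℝ) ^ f.natDegree
      ≤ C * A * (Y : ℝ) ^ ((k : ℝ) - f.natDegree + ε) * (Y : ℝ) ^ f.natDegree := by
    calc _ ≤ ((AA f k Y).card : ℝ) * (A * M) := mul_le_mul_of_nonneg_left h5 (by positivity)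
      _ = A * (((AA f k Y).card : ℝ) * M) := by ring
      _ ≤ A * ((C * (Y : ℝ) ^ ε) * (Y : ℝ) ^ k) :=
        mul_le_mul_of_nonneg_left (h3.trans (mul_le_mul_of_nonneg_right h4 (by positivity)))
          (by positivity)
      _ = C * A * ((Y : ℝ) ^ ((k : ℝ) - f.natDegree + ε) * (Y : ℝ) ^ f.natDegree) := by
        rw [← Real.rpow_natCast (Y : ℝ) f.natDegree, ← Real.rpow_add (by positivity),
          show (k : ℝ) - f.natDegree + ε + f.natDegree = ε + k by ring,
          Real.rpow_add (by positivity), Real.rpow_natCast]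
        ring
      _ = _ := by ring
  have h7 := le_of_mul_le_mul_right h6 (by positivity)
  refine h7.trans (mul_le_mul_of_nonneg_left ?_ (by positivity))
  have hk' : (f.natDegree : ℝ) ≤ k := by exact_mod_cast hk
  exact Real.rpow_le_rpow (by positivity) (by exact_mod_cast hYN) (by linarith)

lemma EE_bound (θ : ℂ) (f : ℤ[X]) (hd : 1 ≤ f.natDegree) (hf : ∀ n : ℤ, f.eval n ≠ 0)
    (hdvd : ∀ P : ℤ[X], aeval θ P = 0 → f ∣ P) (k : ℕ) (ε : ℝ) (hε : 0 < ε) :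
    ∃ C : ℝ, 0 < C ∧ ∀ N : ℕ, 1 ≤ N →
      ((EE θ k N).card : ℝ) ≤ C * (N : ℝ) ^ ((k : ℝ) - f.natDegree + 1 + ε) := by
  classical
  by_cases hk : f.natDegree < k
  · obtain ⟨C1, hC1, h1⟩ := fiber_bound θ f hd hf hdvd k (ε / 2) (by positivity)
    obtain ⟨C2, hC2, h2⟩ := AA_bound f hf k hk.le (ε / 2) (by positivity)
    refine ⟨C1 * C2, by positivity, fun N hN => ?_⟩
    have hN' : (0 : ℝ) < N := by exact_mod_cast hN
    set I := (EE θ k N).image Prod.fst with hI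
    have hE : ∀ p ∈ EE θ k N, p.1 ∈ box k N ∧ p.2 ∈ box k N ∧
        ∏ i, ((p.1 i : ℂ) + θ) = ∏ i, ((p.2 i : ℂ) + θ) ∧ ∃ j, ∀ i, p.1 i < p.2 j := by
      intro p hp
      have := Finset.mem_filter.mp hp
      have h' := Finset.mem_product.mp this.1
      exact ⟨h'.1, h'.2, this.2⟩
    have hIsub : I ⊆ (Finset.Icc 1 N).biUnion (fun Y => AA f k Y) := by
      intro x hx
      obtain ⟨p, hp, rfl⟩ := Finset.mem_image.mp hx
      obtain ⟨hp1, hp2, hp3, j, hj⟩ := hE p hp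
      rw [Finset.mem_biUnion]
      refine ⟨p.2 j, Finset.mem_Icc.mpr (mem_box.mp hp2 j), ?_⟩
      rw [AA, Finset.mem_filter]
      refine ⟨mem_box.mpr fun i => ⟨(mem_box.mp hp1 i).1, (hj i).le⟩, hj, ?_⟩
      exact dvd_at p.1 p.2 (PP_sub_dvd hdvd _ _ hp3) j hj
    have hIcard : (I.card : ℝ) ≤ N * (C2 * (N : ℝ) ^ ((k : ℝ) - f.natDegree + ε / 2)) := by
      calc (I.card : ℝ) ≤ ((∑ Y ∈ Finset.Icc 1 N, (AA f k Y).card : ℕ) : ℝ) := by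
            exact_mod_cast (Finset.card_le_card hIsub).trans Finset.card_biUnion_le
        _ = ∑ Y ∈ Finset.Icc 1 N, ((AA f k Y).card : ℝ) := by push_cast; rfl
        _ ≤ ∑ Y ∈ Finset.Icc 1 N, (C2 * (N : ℝ) ^ ((k : ℝ) - f.natDegree + ε / 2)) := by
            refine Finset.sum_le_sum fun Y hY => ?_
            have := Finset.mem_Icc.mp hY
            exact h2 N Y this.1 this.2
        _ = _ := by simp
    have hcard : ((EE θ k N).card : ℝ) ≤ ∑ x ∈ I, (C1 * (N : ℝ) ^ (ε / 2)) := by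
      rw [Finset.card_eq_sum_card_image Prod.fst]
      push_cast
      refine Finset.sum_le_sum fun x hx => ?_
      obtain ⟨p, hp, rfl⟩ := Finset.mem_image.mp hx
      have h3 := h1 N hN p.1 (hE p hp).1
        (((EE θ k N).filter (fun q => q.1 = p.1)).image Prod.snd) ?_ ?_
      · rwa [Finset.card_image_of_injOn] at h3
        intro q hq q' hq' h
        have hq := (Finset.mem_filter.mp (Finset.mem_coe.mp hq)).2
        have hq' := (Finset.mem_filter.mp (Finset.mem_coe.mp hq')).2
        exact Prod.ext (hq.trans hq'.symm) h
      · intro y hy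
        obtain ⟨q, hq, rfl⟩ := Finset.mem_image.mp hy
        exact (hE q (Finset.mem_filter.mp hq).1).2.1
      · intro y hy
        obtain ⟨q, hq, rfl⟩ := Finset.mem_image.mp hy
        have h4 := (hE q (Finset.mem_filter.mp hq).1).2.2.1
        rwa [(Finset.mem_filter.mp hq).2] at h4
    refine hcard.trans ?_
    rw [Finset.sum_const, nsmul_eq_mul]
    refine (mul_le_mul_of_nonneg_right hIcard (by positivity)).trans (le_of_eq ?_)
    rw [show (k : ℝ) - f.natDegree + 1 + ε = 1 + ((k : ℝ) - f.natDegree + ε / 2) + ε / 2 by ring,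
      Real.rpow_add hN' (1 + ((k : ℝ) - f.natDegree + ε / 2)) (ε / 2), Real.rpow_add hN' 1,
      Real.rpow_one]
    ring
  · refine ⟨1, one_pos, fun N hN => ?_⟩
    have : EE θ k N = ∅ := by
      rw [Finset.eq_empty_iff_forall_notMem]
      intro p hp
      obtain ⟨_, h1, j, hj⟩ := Finset.mem_filter.mp hp
      exact hk (deg_lt p.1 p.2 (PP_sub_dvd hdvd _ _ h1) j hj)
    rw [this]
    simp
    positivity

lemma not_perm_succAbove {k : ℕ} (x y : Fin (k + 1) → ℕ) (i j : Fin (k + 1)) (hij : x i = y j)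
    (h : ¬ ∃ σ : Equiv.Perm (Fin (k + 1)), ∀ i, y i = x (σ i)) :
    ¬ ∃ σ : Equiv.Perm (Fin k), ∀ l, y (j.succAbove l) = x (i.succAbove (σ l)) := by
  rintro ⟨σ, hσ⟩
  apply h
  refine ⟨(finSuccEquiv' j).trans ((Equiv.optionCongr σ).trans (finSuccEquiv' i).symm), fun l => ?_⟩
  rcases Fin.eq_self_or_eq_succAbove j l with rfl | ⟨l, rfl⟩
  · simp [hij]
  · simp [hσ l]

lemma Sol_step (θ : ℂ) (hθ : ∀ n : ℕ, (n : ℂ) + θ ≠ 0) (k N : ℕ) :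
    (Sol θ (k + 1) N).card ≤ (k + 1) * (k + 1) * (N * (Sol θ k N).card)
      + ((EE θ (k + 1) N).card + (EE θ (k + 1) N).card) := by
  classical
  set B : Fin (k + 1) × Fin (k + 1) → Finset ((Fin (k + 1) → ℕ) × (Fin (k + 1) → ℕ)) :=
    fun a => (Sol θ (k + 1) N).filter fun p => p.1 a.1 = p.2 a.2 with hB
  have hBc : ∀ a, (B a).card ≤ N * (Sol θ k N).card := by
    intro a
    have : (Finset.Icc 1 N ×ˢ Sol θ k N).card = N * (Sol θ k N).card := by simp
    rw [← this]
    refine Finset.card_le_card_of_injOn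
      (fun p => (p.1 a.1, (fun l => p.1 (a.1.succAbove l), fun l => p.2 (a.2.succAbove l)))) ?_ ?_
    · intro p hp
      obtain ⟨hp1, hp2⟩ := Finset.mem_filter.mp (Finset.mem_coe.mp hp)
      obtain ⟨hp3, hp4, hp5⟩ := Finset.mem_filter.mp hp1
      obtain ⟨hp6, hp7⟩ := Finset.mem_product.mp hp3
      rw [mem_box] at hp6 hp7
      rw [Finset.mem_coe, Finset.mem_product]
      refine ⟨Finset.mem_Icc.mpr (hp6 _), ?_⟩
      rw [Sol, Finset.mem_filter, Finset.mem_product]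
      refine ⟨⟨mem_box.mpr fun l => hp6 _, mem_box.mpr fun l => hp7 _⟩, ?_, ?_⟩
      · rw [Fin.prod_univ_succAbove _ a.1, Fin.prod_univ_succAbove _ a.2, hp2] at hp4
        exact mul_left_cancel₀ (hθ _) hp4
      · exact not_perm_succAbove p.1 p.2 a.1 a.2 hp2 hp5
    · intro p hp q hq h
      obtain ⟨_, hp2⟩ := Finset.mem_filter.mp (Finset.mem_coe.mp hp)
      obtain ⟨_, hq2⟩ := Finset.mem_filter.mp (Finset.mem_coe.mp hq)
      simp only [Prod.mk.injEq] at h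
      obtain ⟨h1, h2, h3⟩ := h
      have e1 : p.1 = q.1 := by
        funext i
        rcases Fin.eq_self_or_eq_succAbove a.1 i with rfl | ⟨l, rfl⟩
        · exact h1
        · exact congrFun h2 l
      have e2 : p.2 = q.2 := by
        funext i
        rcases Fin.eq_self_or_eq_succAbove a.2 i with rfl | ⟨l, rfl⟩
        · rw [← hp2, ← hq2, h1]
        · exact congrFun h3 l
      exact Prod.ext e1 e2
  have hsub : Sol θ (k + 1) N ⊆ (Finset.univ.biUnion B) ∪
      (EE θ (k + 1) N ∪ (EE θ (k + 1) N).image Prod.swap) := by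
    intro p hp
    obtain ⟨hp1, hp2, hp3⟩ := Finset.mem_filter.mp hp
    obtain ⟨hp4, hp5⟩ := Finset.mem_product.mp hp1
    by_cases hc : ∃ i j, p.1 i = p.2 j
    · obtain ⟨i, j, hij⟩ := hc
      refine Finset.mem_union_left _ (Finset.mem_biUnion.mpr ⟨(i, j), Finset.mem_univ _, ?_⟩)
      exact Finset.mem_filter.mpr ⟨hp, hij⟩
    · push Not at hc
      refine Finset.mem_union_right _ ?_
      obtain ⟨i, hi⟩ := Finite.exists_max p.1
      obtain ⟨j, hj⟩ := Finite.exists_max p.2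
      rcases lt_or_gt_of_ne (hc i j) with h | h
      · refine Finset.mem_union_left _ (Finset.mem_filter.mpr ⟨hp1, hp2, j, fun l => ?_⟩)
        exact (hi l).trans_lt h
      · refine Finset.mem_union_right _ (Finset.mem_image.mpr ⟨p.swap, ?_, by simp⟩)
        refine Finset.mem_filter.mpr ⟨Finset.mem_product.mpr ⟨hp5, hp4⟩, hp2.symm, i, fun l => ?_⟩
        exact (hj l).trans_lt h
  refine (Finset.card_le_card hsub).trans ((Finset.card_union_le _ _).trans ?_)
  refine Nat.add_le_add ?_ ((Finset.card_union_le _ _).trans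
    (Nat.add_le_add_left Finset.card_image_le _))
  refine Finset.card_biUnion_le.trans ((Finset.sum_le_sum fun a _ => hBc a).trans ?_)
  simp

lemma Sol_bound (θ : ℂ) (hθ : ∀ n : ℕ, (n : ℂ) + θ ≠ 0) (f : ℤ[X]) (hd : 1 ≤ f.natDegree)
    (hf : ∀ n : ℤ, f.eval n ≠ 0)
    (hdvd : ∀ P : ℤ[X], aeval θ P = 0 → f ∣ P) (ε : ℝ) (hε : 0 < ε) (k : ℕ) :
    ∃ C : ℝ, 0 < C ∧ ∀ N : ℕ, 1 ≤ N →
      ((Sol θ k N).card : ℝ) ≤ C * (N : ℝ) ^ ((k : ℝ) - f.natDegree + 1 + ε) := by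
  induction k with
  | zero =>
    refine ⟨1, one_pos, fun N hN => ?_⟩
    have : Sol θ 0 N = ∅ := by
      rw [Finset.eq_empty_iff_forall_notMem]
      intro p hp
      exact (Finset.mem_filter.mp hp).2.2 ⟨1, fun i => i.elim0⟩
    rw [this]
    simp
    positivity
  | succ k ih =>
    obtain ⟨C1, hC1, h1⟩ := ih
    obtain ⟨C2, hC2, h2⟩ := EE_bound θ f hd hf hdvd (k + 1) ε hε
    refine ⟨((k : ℝ) + 1) * (k + 1) * C1 + 2 * C2, by positivity, fun N hN => ?_⟩
    have hN' : (0 : ℝ) < N := by exact_mod_cast hN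
    have h3 : ((Sol θ (k + 1) N).card : ℝ) ≤ ((k : ℝ) + 1) * (k + 1) * (N * (Sol θ k N).card)
      + ((EE θ (k + 1) N).card + (EE θ (k + 1) N).card) := by
      exact_mod_cast Sol_step θ hθ k N
    have h4 := h2 N hN
    have h5 : (N : ℝ) * (Sol θ k N).card
        ≤ C1 * (N : ℝ) ^ (((k + 1 : ℕ) : ℝ) - f.natDegree + 1 + ε) := by
      refine (mul_le_mul_of_nonneg_left (h1 N hN) hN'.le).trans (le_of_eq ?_)
      rw [show ((k + 1 : ℕ) : ℝ) - f.natDegree + 1 + ε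
        = 1 + ((k : ℝ) - f.natDegree + 1 + ε) by push_cast; ring, Real.rpow_add hN' 1,
        Real.rpow_one]
      ring
    have h6 := mul_le_mul_of_nonneg_left h5 (show 0 ≤ ((k : ℝ) + 1) * (k + 1) by positivity)
    linarith

end Paucity

open Paucity in
/-- **Theorem 1.2 (Heap–Sahay–Wooley).**
If `θ ∈ ℂ` is algebraic over `ℚ` of degree `d` with `2 ≤ d < k`, then for every `ε > 0`
there is `C > 0` such that for `X ≥ 2` the number of non-diagonal solutions of
`(x₁+θ)⋯(x_k+θ) = (y₁+θ)⋯(y_k+θ)` with `1 ≤ x_i, y_i ≤ X` is at most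
`C · X^(k−d+1+ε)`. -/
theorem paucity_nondiagonal_small_degree (k d : ℕ) (hk : 0 < k) (θ : ℂ)
    (hθ : IsAlgebraic ℚ θ) (hdeg : (minpoly ℚ θ).natDegree = d)
    (hd2 : 2 ≤ d) (hdk : d < k) (ε : ℝ) (hε : 0 < ε) :
    ∃ C : ℝ, 0 < C ∧ ∀ X : ℝ, 2 ≤ X →
      ({p : (Fin k → ℤ) × (Fin k → ℤ) |
          (∀ i, 1 ≤ p.1 i ∧ (p.1 i : ℝ) ≤ X) ∧ (∀ i, 1 ≤ p.2 i ∧ (p.2 i : ℝ) ≤ X) ∧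
          ∏ i, ((p.1 i : ℂ) + θ) = ∏ i, ((p.2 i : ℂ) + θ) ∧
          ¬ ∃ σ : Equiv.Perm (Fin k), ∀ i, p.2 i = p.1 (σ i)}.ncard : ℝ)
        ≤ C * X ^ ((k : ℝ) - d + 1 + ε) := by
  obtain ⟨f, hfd, hf, hdvd⟩ := exists_poly θ hθ d hdeg hd2
  have hθn : ∀ n : ℕ, (n : ℂ) + θ ≠ 0 := by
    intro n h
    have h1 : Polynomial.aeval θ (Polynomial.X + Polynomial.C (n : ℤ)) = 0 := by
      simp [add_comm] at h ⊢; exact h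
    have h2 := Polynomial.natDegree_le_of_dvd (hdvd _ h1) (Polynomial.X_add_C_ne_zero _)
    rw [Polynomial.natDegree_X_add_C] at h2
    omega
  obtain ⟨C, hC, h⟩ := Sol_bound θ hθn f (by omega) hf hdvd ε hε k
  refine ⟨C, hC, fun X hX => ?_⟩
  set N := ⌊X⌋₊ with hN
  have hN1 : 1 ≤ N := Nat.le_floor (by norm_num; linarith)
  have hNX : (N : ℝ) ≤ X := Nat.floor_le (by linarith)
  have hdk' : (d : ℝ) ≤ k := by exact_mod_cast hdk.le
  have h1 := h N hN1
  rw [hfd] at h1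
  refine le_trans ?_ (h1.trans (mul_le_mul_of_nonneg_left
    (Real.rpow_le_rpow (by positivity) hNX (by linarith)) hC.le))
  rw [← Set.ncard_coe_finset]
  have hpos : ∀ z : Fin k → ℤ, (∀ i, 1 ≤ z i ∧ (z i : ℝ) ≤ X) → ∀ i, (((z i).toNat : ℕ) : ℤ) = z i :=
    fun z hz i => Int.toNat_of_nonneg (by have := (hz i).1; omega)
  have hle : ∀ z : Fin k → ℤ, (∀ i, 1 ≤ z i ∧ (z i : ℝ) ≤ X) →
      (fun i => (z i).toNat) ∈ box k N := by
    intro z hz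
    rw [mem_box]
    intro i
    have h2 := hpos z hz i
    have h3 := hz i
    refine ⟨by omega, Nat.le_floor ?_⟩
    rw [← h2] at h3
    exact_mod_cast h3.2
  have hcast : ∀ z : Fin k → ℤ, (∀ i, 1 ≤ z i ∧ (z i : ℝ) ≤ X) → ∀ i,
      (((z i).toNat : ℕ) : ℂ) = ((z i : ℤ) : ℂ) := by
    intro z hz i
    have h2 := congrArg (fun t : ℤ => (t : ℂ)) (hpos z hz i)
    simpa only [Int.cast_natCast] using h2
  have hmain := Set.ncard_le_ncard_of_injOn
    (s := {p : (Fin k → ℤ) × (Fin k → ℤ) |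
          (∀ i, 1 ≤ p.1 i ∧ (p.1 i : ℝ) ≤ X) ∧ (∀ i, 1 ≤ p.2 i ∧ (p.2 i : ℝ) ≤ X) ∧
          ∏ i, ((p.1 i : ℂ) + θ) = ∏ i, ((p.2 i : ℂ) + θ) ∧
          ¬ ∃ σ : Equiv.Perm (Fin k), ∀ i, p.2 i = p.1 (σ i)})
    (t := ((Sol θ k N : Finset _) : Set ((Fin k → ℕ) × (Fin k → ℕ))))
    (fun p => (fun i => (p.1 i).toNat, fun i => (p.2 i).toNat)) ?_ ?_ (Finset.finite_toSet _)
  · exact_mod_cast hmain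
  · rintro p ⟨hp1, hp2, hp3, hp4⟩
    rw [Finset.mem_coe, Sol, Finset.mem_filter, Finset.mem_product]
    refine ⟨⟨hle _ hp1, hle _ hp2⟩, ?_, ?_⟩
    · simp only [hcast _ hp1, hcast _ hp2]
      exact hp3
    · rintro ⟨σ, hσ⟩
      refine hp4 ⟨σ, fun i => ?_⟩
      rw [← hpos _ hp2 i, ← hpos _ hp1 (σ i)]
      exact_mod_cast hσ i
  · rintro p ⟨hp1, hp2, -, -⟩ q ⟨hq1, hq2, -, -⟩ hpq
    simp only [Prod.mk.injEq] at hpq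
    refine Prod.ext (funext fun i => ?_) (funext fun i => ?_)
    · rw [← hpos _ hp1 i, ← hpos _ hq1 i]
      exact_mod_cast congrFun hpq.1 i
    · rw [← hpos _ hp2 i, ← hpos _ hq2 i]
      exact_mod_cast congrFun hpq.2 i
end

section
/- Let k be a positive integer and let θ ∈ ℂ with θ ∉ ℚ (θ is either irrational algebraic or transcendental over ℚ). Then for every ε > 0 there exists a constant C > 0 such that for all real X ≥ 2, the number N_k(X) of 2k-tuples of integers (x₁,…,x_k,y₁,…,y_k) with 1 ≤ x_i, y_i ≤ X for all i and (x₁+θ)⋯(x_k+θ) = (y₁+θ)⋯(y_k+θ) satisfies |N_k(X) − k!·⌊X⌋^k| ≤ C·X^{k−1+ε}. -/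
section
open Polynomial


lemma aux_prime_pow (δ : ℝ) (hδ : 0 < δ) : ∃ K : ℝ, 1 ≤ K ∧ ∀ p a : ℕ, 2 ≤ p →
    ((a : ℝ) + 1 ≤ K * ((p : ℝ) ^ a) ^ δ) := by
  have hl : 0 < Real.log 2 := Real.log_pos (by norm_num)
  refine ⟨max 1 (1 / (δ * Real.log 2)), le_max_left _ _, ?_⟩
  intro p a hp
  set K := max 1 (1 / (δ * Real.log 2)) with hK
  have h1 : 1 ≤ K := le_max_left _ _
  have h2 : 1 ≤ K * (δ * Real.log 2) := by
    have : 1 / (δ * Real.log 2) ≤ K := le_max_right _ _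
    rwa [div_le_iff₀ (by positivity)] at this
  have h3 : (1 : ℝ) + a * δ * Real.log 2 ≤ ((2 : ℝ) ^ a) ^ δ := by
    rw [← Real.rpow_natCast, ← Real.rpow_mul (by norm_num), Real.rpow_def_of_pos (by norm_num)]
    have := Real.add_one_le_exp (Real.log 2 * (a * δ))
    linarith
  have h4 : ((2 : ℝ) ^ a) ^ δ ≤ ((p : ℝ) ^ a) ^ δ := by
    have : (2 : ℝ) ≤ p := by exact_mod_cast hp
    gcongr
  calc (a : ℝ) + 1 ≤ K * (1 + a * δ * Real.log 2) := by
        have : (a : ℝ) * 1 ≤ a * (K * (δ * Real.log 2)) := by gcongr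
        linarith
    _ ≤ _ := by gcongr; exact h3.trans h4

lemma aux_prime_pow_large (δ : ℝ) (hδ : 0 < δ) (p a : ℕ) (hp : (2 : ℝ) ^ (1 / δ) ≤ p) :
    ((a : ℝ) + 1 ≤ ((p : ℝ) ^ a) ^ δ) := by
  have h : (2 : ℝ) ≤ (p : ℝ) ^ δ := by
    calc (2 : ℝ) = ((2 : ℝ) ^ (1 / δ)) ^ δ := by
          rw [← Real.rpow_mul (by norm_num)]; field_simp; simp
      _ ≤ _ := by gcongr
  have h2 : ((p : ℝ) ^ a) ^ δ = ((p : ℝ) ^ δ) ^ a := by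
    rw [← Real.rpow_natCast, ← Real.rpow_natCast, ← Real.rpow_mul (by positivity),
      ← Real.rpow_mul (by positivity), mul_comm]
  rw [h2]
  have h3 : (a : ℝ) + 1 ≤ 2 ^ a := by
    exact_mod_cast Nat.lt_two_pow_self (n := a)
  exact h3.trans (by gcongr)

lemma divisor_bound (δ : ℝ) (hδ : 0 < δ) : ∃ C : ℝ, 1 ≤ C ∧ ∀ n : ℕ, n ≠ 0 →
    (n.divisors.card : ℝ) ≤ C * (n : ℝ) ^ δ := by
  obtain ⟨K, hK, hKp⟩ := aux_prime_pow δ hδ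
  set P := ⌈(2 : ℝ) ^ (1 / δ)⌉₊ with hP
  refine ⟨K ^ P, one_le_pow₀ hK, ?_⟩
  intro n hn
  rw [Nat.card_divisors hn]
  have hfac : (n : ℝ) ^ δ = ∏ p ∈ n.primeFactors, ((p : ℝ) ^ (n.factorization p)) ^ δ := by
    rw [Real.finsetProd_rpow _ _ (by intros; positivity)]
    congr 1
    conv_lhs => rw [← Nat.prod_factorization_pow_eq_self hn]
    rw [Finsupp.prod]
    push_cast
    rfl
  rw [hfac]
  push_cast
  calc ∏ p ∈ n.primeFactors, ((n.factorization p : ℝ) + 1)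
      ≤ ∏ p ∈ n.primeFactors, ((if p < P then K else 1) * ((p : ℝ) ^ (n.factorization p)) ^ δ) := by
        apply Finset.prod_le_prod
        · intros; positivity
        · intro p hp
          split_ifs with h
          · exact hKp p _ (Nat.prime_of_mem_primeFactors hp).two_le
          · rw [one_mul]
            apply aux_prime_pow_large δ hδ
            exact (Nat.le_ceil _).trans (by exact_mod_cast not_lt.mp h)
    _ = (∏ p ∈ n.primeFactors, (if p < P then K else 1)) * _ := Finset.prod_mul_distrib
    _ ≤ _ := by
        gcongr
        rw [← Finset.prod_filter, Finset.prod_const]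
        apply pow_le_pow_right₀ hK
        calc _ ≤ (Finset.range P).card := by
              apply Finset.card_le_card
              intro p hp
              simp at hp ⊢
              exact hp.2
          _ = P := by simp

lemma exists_poly (θ : ℂ) (hθ : ∀ q : ℚ, θ ≠ (q : ℂ)) (ha : IsAlgebraic ℚ θ) :
    ∃ f : ℤ[X], 2 ≤ f.natDegree ∧ (∀ z : ℤ, f.eval z ≠ 0) ∧
      ∀ F : ℤ[X], aeval θ F = 0 → f ∣ F := by
  have hi : IsIntegral ℚ θ := ha.isIntegral
  set m := minpoly ℚ θ with hm
  have hm0 : m ≠ 0 := minpoly.ne_zero hi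
  obtain ⟨b, hb, hbm⟩ := IsLocalization.integerNormalization_spec (nonZeroDivisors ℤ) m
  set g := IsLocalization.integerNormalization (nonZeroDivisors ℤ) m with hg
  have hb0 : b ≠ 0 := nonZeroDivisors.ne_zero hb
  have hg0 : g ≠ 0 := by
    intro h
    rw [h] at hbm
    simp at hbm
    tauto
  have hc0 : g.content ≠ 0 := by simpa [content_eq_zero_iff] using hg0
  have hgm : g.map (Int.castRingHom ℚ) = C (b : ℚ) * m := by
    have : g.map (Int.castRingHom ℚ) = b • m := by simpa using hbm
    rw [this]; simp
  have hmap : C (g.content : ℚ) * g.primPart.map (Int.castRingHom ℚ) = C (b : ℚ) * m := by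
    rw [← hgm]
    conv_rhs => rw [g.eq_C_content_mul_primPart]
    simp
  have hcq : (g.content : ℚ) ≠ 0 := by exact_mod_cast hc0
  have hbq : (b : ℚ) ≠ 0 := by exact_mod_cast hb0
  refine ⟨g.primPart, ?_, ?_, ?_⟩
  · have h1 : (g.primPart.map (Int.castRingHom ℚ)).natDegree = m.natDegree := by
      rw [← natDegree_C_mul hcq, hmap, natDegree_C_mul hbq]
    rw [natDegree_map_eq_of_injective (Int.cast_injective)] at h1
    rw [h1, hm, minpoly.two_le_natDegree_iff hi]
    rintro ⟨q, hq⟩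
    exact hθ q (by simpa using hq.symm)
  · intro z hz
    have h2 := congrArg (eval (z : ℚ)) hmap
    have h3 : eval (z : ℚ) (g.primPart.map (Int.castRingHom ℚ)) = 0 := by
      have := eval_intCast_map (Int.castRingHom ℚ) g.primPart z
      rw [this, Int.cast_id, hz]; simp
    rw [eval_mul, eval_mul, h3] at h2
    simp [hbq] at h2
    have := minpoly.root hi h2
    exact hθ z (by simpa using this.symm)
  · intro F hF
    rw [IsPrimitive.Int.dvd_iff_map_cast_dvd_map_cast _ _ g.isPrimitive_primPart]
    have h1 : m ∣ F.map (Int.castRingHom ℚ) := by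
      apply minpoly.dvd
      rw [← hF]
      have := aeval_map_algebraMap ℚ θ F
      simpa using this
    obtain ⟨r, hr⟩ := h1
    refine ⟨C ((g.content : ℚ) / b) * r, ?_⟩
    rw [hr]
    have : m = C ((b : ℚ)⁻¹) * (C (b : ℚ) * m) := by
      rw [← mul_assoc, ← C_mul, inv_mul_cancel₀ hbq]; simp
    rw [this, ← hmap, div_eq_mul_inv, C_mul]
    ring

lemma poly_lower (f : ℤ[X]) (hf : 2 ≤ f.natDegree) (h0 : ∀ z : ℤ, f.eval z ≠ 0) :
    ∃ B : ℝ, 0 < B ∧ ∀ Y : ℕ, 1 ≤ Y → (Y : ℝ) ^ 2 ≤ B * ((f.eval (-(Y : ℤ))).natAbs : ℝ) := by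
  set Q : ℝ[X] := (f.map (Int.castRingHom ℝ)).comp (-X) with hQ
  have hQd : Q.natDegree = f.natDegree := by
    rw [hQ, natDegree_comp, natDegree_neg, natDegree_X, mul_one,
      natDegree_map_eq_of_injective Int.cast_injective]
  have hQ0 : Q ≠ 0 := by
    intro h; rw [h] at hQd; simp at hQd; omega
  have hO := isBigO_atTop_of_degree_le (X ^ 2 : ℝ[X]) Q (by
    rw [degree_X_pow, degree_eq_natDegree hQ0, hQd]; exact_mod_cast hf)
  obtain ⟨c, hc⟩ := hO.bound
  rw [Filter.eventually_atTop] at hc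
  obtain ⟨T, hT⟩ := hc
  have hev : ∀ Y : ℕ, |Q.eval (Y : ℝ)| = ((f.eval (-(Y : ℤ))).natAbs : ℝ) := by
    intro Y
    have : Q.eval (Y : ℝ) = ((f.eval (-(Y : ℤ)) : ℤ) : ℝ) := by
      rw [hQ]
      simp only [eval_comp, eval_neg, eval_X]
      have := eval_intCast_map (Int.castRingHom ℝ) f (-(Y : ℤ))
      simpa using this
    rw [this, Nat.cast_natAbs, Int.cast_abs]
  refine ⟨max (max c 1) (T ^ 2), by positivity, ?_⟩
  intro Y hY
  have h1 : (1 : ℝ) ≤ ((f.eval (-(Y : ℤ))).natAbs : ℝ) := by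
    have := Int.natAbs_pos.mpr (h0 (-(Y : ℤ)))
    exact_mod_cast this
  rcases le_total T (Y : ℝ) with h | h
  · have := hT Y h
    simp only [eval_pow, eval_X, Real.norm_eq_abs, hev] at this
    rw [abs_of_nonneg (by positivity)] at this
    refine this.trans ?_
    gcongr
    exact (le_max_left _ _).trans (le_max_left _ _)
  · calc (Y : ℝ) ^ 2 ≤ T ^ 2 := by gcongr
      _ ≤ max (max c 1) (T ^ 2) * 1 := by rw [mul_one]; exact le_max_right _ _
      _ ≤ _ := by gcongr

lemma poly_upper (f : ℤ[X]) : ∃ B : ℝ, 1 ≤ B ∧ ∀ (n : ℕ) (x : ℤ), 1 ≤ x → x ≤ n →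
    ((f.eval (-x)).natAbs : ℝ) ≤ B * (n : ℝ) ^ f.natDegree := by
  refine ⟨1 + ∑ i ∈ Finset.range (f.natDegree + 1), |(f.coeff i : ℝ)|, ?_, ?_⟩
  · have : 0 ≤ ∑ i ∈ Finset.range (f.natDegree + 1), |(f.coeff i : ℝ)| := by positivity
    linarith
  intro n x hx hxn
  have hn : (1 : ℝ) ≤ n := by exact_mod_cast hx.trans hxn
  have hx0 : (0 : ℝ) ≤ x := by exact_mod_cast (by omega : 0 ≤ x)
  have hxnr : (x : ℝ) ≤ n := by exact_mod_cast hxn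
  rw [Nat.cast_natAbs, eval_eq_sum_range]
  push_cast
  calc _ ≤ ∑ i ∈ Finset.range (f.natDegree + 1), |(f.coeff i : ℝ) * (-(x : ℝ)) ^ i| :=
        Finset.abs_sum_le_sum_abs _ _
    _ ≤ ∑ i ∈ Finset.range (f.natDegree + 1), |(f.coeff i : ℝ)| * (n : ℝ) ^ f.natDegree := by
        apply Finset.sum_le_sum
        intro i hi
        rw [abs_mul, abs_pow, abs_neg, abs_of_nonneg hx0]
        gcongr
        calc (x : ℝ) ^ i ≤ (n : ℝ) ^ i := by gcongr
          _ ≤ _ := pow_le_pow_right₀ hn (by simp at hi; omega)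
    _ ≤ _ := by
        rw [← Finset.sum_mul]
        gcongr
        linarith

lemma prod_eval_eq {k : ℕ} (f : ℤ[X]) (x y : Fin k → ℤ)
    (h : f ∣ (∏ i, (X + C (x i)) - ∏ i, (X + C (y i)))) :
    ∏ i, f.eval (- x i) = ∏ i, f.eval (- y i) := by
  set g := f.map (Int.castRingHom ℂ) with hg
  have hs : g.Splits := IsAlgClosed.splits g
  have hev : ∀ z : ℤ, ((f.eval z : ℤ) : ℂ) = g.eval (z : ℂ) := by
    intro z
    have := eval_intCast_map (Int.castRingHom ℂ) f z
    rw [hg, this]; simp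
  have key : ∀ w : Fin k → ℤ, ∏ i, g.eval (-(w i : ℂ)) =
      g.leadingCoeff ^ k * (g.roots.map (fun r => (-1) ^ k * ∏ i, ((w i : ℂ) + r))).prod := by
    intro w
    simp only [hs.eval_eq_prod_roots]
    rw [Finset.prod_mul_distrib]
    congr 1
    · simp
    · rw [show (∏ i, (g.roots.map (fun r => -(w i : ℂ) - r)).prod) = (g.roots.map (fun r => ∏ i, (-(w i : ℂ) - r))).prod from Multiset.prod_map_prod_map Finset.univ.val g.roots]
      congr 1
      apply Multiset.map_congr rfl
      intro r _
      have : ∀ i, (-(w i : ℂ) - r) = (-1) * ((w i : ℂ) + r) := by intro i; ring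
      simp only [this, Finset.prod_mul_distrib]
      simp
  have : ((∏ i, f.eval (- x i) : ℤ) : ℂ) = ((∏ i, f.eval (- y i) : ℤ) : ℂ) := by
    push_cast
    simp only [hev]
    push_cast
    rw [key, key]
    congr 2
    apply Multiset.map_congr rfl
    intro r hr
    obtain ⟨q, hq⟩ := h
    have h1 := congrArg (fun p => (p.map (Int.castRingHom ℂ)).eval r) hq
    have h2 : g.eval r = 0 := (mem_roots'.mp hr).2
    simp only [Polynomial.map_mul, eval_mul, ← hg, h2, Polynomial.map_sub, eval_sub, zero_mul,
      Polynomial.map_prod, eval_prod] at h1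
    simp at h1
    congr 1
    rw [sub_eq_zero] at h1
    convert h1 using 2 <;> ring
  exact_mod_cast this

lemma count_multiples (k : ℕ) (hk : 1 ≤ k) (ε : ℝ) (hε : 0 < ε) : ∃ C : ℝ, 0 < C ∧
    ∀ Y M : ℕ, 1 ≤ Y → 1 ≤ M →
    ((((Fintype.piFinset (fun _ : Fin k => Finset.Icc 1 Y)).filter
      (fun u => M ∣ ∏ i, u i)).card : ℕ) : ℝ) ≤ C * ((Y : ℝ) ^ k / M) * (Y : ℝ) ^ ε := by
  have hk0 : (0 : ℝ) < k := by exact_mod_cast hk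
  obtain ⟨C, hC, hdiv⟩ := divisor_bound (ε / (k * k)) (by positivity)
  refine ⟨C ^ k, by positivity, ?_⟩
  intro Y M hY hM
  set S := (Fintype.piFinset (fun _ : Fin k => Finset.Icc 1 Y)).filter
      (fun u => M ∣ ∏ i, u i) with hS
  have hY0 : (0 : ℝ) ≤ Y := by positivity
  have hmaps : ∀ u ∈ S, (∏ i, u i) ∈ (Finset.Ioc 0 (Y ^ k)).filter (M ∣ ·) := by
    intro u hu
    simp only [hS, Finset.mem_filter, Fintype.mem_piFinset, Finset.mem_Icc] at hu
    simp only [Finset.mem_filter, Finset.mem_Ioc]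
    refine ⟨⟨Finset.prod_pos (fun i _ => (hu.1 i).1), ?_⟩, hu.2⟩
    calc ∏ i, u i ≤ ∏ i : Fin k, Y := Finset.prod_le_prod' (fun i _ => (hu.1 i).2)
      _ = Y ^ k := by simp
  rw [Finset.card_eq_sum_card_fiberwise hmaps]
  push_cast
  calc _ ≤ ∑ P ∈ (Finset.Ioc 0 (Y ^ k)).filter (M ∣ ·), (C ^ k * (Y : ℝ) ^ ε) := by
        apply Finset.sum_le_sum
        intro P hP
        simp only [Finset.mem_filter, Finset.mem_Ioc] at hP
        have h1 : (S.filter (fun u => ∏ i, u i = P)).card ≤ P.divisors.card ^ k := by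
          calc _ ≤ (Fintype.piFinset (fun _ : Fin k => P.divisors)).card := by
                apply Finset.card_le_card
                intro u hu
                simp only [Finset.mem_filter] at hu
                simp only [Fintype.mem_piFinset, Nat.mem_divisors]
                intro i
                exact ⟨hu.2 ▸ Finset.dvd_prod_of_mem u (Finset.mem_univ i), by omega⟩
            _ = _ := by simp
        have h2 := hdiv P (by omega)
        have h3 : (P : ℝ) ≤ (Y : ℝ) ^ k := by exact_mod_cast hP.1.2
        calc (((S.filter (fun u => ∏ i, u i = P)).card : ℕ) : ℝ) ≤ (P.divisors.card : ℝ) ^ k := by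
              exact_mod_cast h1
          _ ≤ (C * ((Y : ℝ) ^ k) ^ (ε / (k * k))) ^ k := by
              gcongr
              exact h2.trans (by gcongr)
          _ = _ := by
              rw [mul_pow]
              congr 1
              rw [← Real.rpow_natCast, ← Real.rpow_natCast, ← Real.rpow_mul hY0,
                ← Real.rpow_mul hY0]
              congr 1
              field_simp
    _ = ((Y ^ k / M : ℕ) : ℝ) * (C ^ k * (Y : ℝ) ^ ε) := by
        rw [Finset.sum_const, Nat.Ioc_filter_dvd_card_eq_div, nsmul_eq_mul]
    _ ≤ ((Y : ℝ) ^ k / M) * (C ^ k * (Y : ℝ) ^ ε) := by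
        gcongr
        have := @Nat.cast_div_le ℝ _ _ _ (Y ^ k) M
        simpa using this
    _ = _ := by ring

lemma fiber_poly (f : ℤ[X]) (hf : 1 ≤ f.natDegree) (s : Finset ℤ) (e : ℕ) :
    (s.filter (fun z => (f.eval (-z)).natAbs = e)).card ≤ 2 * f.natDegree := by
  have hne : ∀ c : ℤ, f - C c ≠ 0 := by
    intro c h
    rw [sub_eq_zero] at h
    rw [h] at hf; simp at hf
  have hcard : ∀ c : ℤ, (f - C c).roots.toFinset.card ≤ f.natDegree := by
    intro c
    calc _ ≤ _ := Multiset.toFinset_card_le _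
      _ ≤ _ := card_roots' _
      _ = _ := natDegree_sub_C
  calc _ = ((s.filter (fun z => (f.eval (-z)).natAbs = e)).image (fun z => -z)).card := by
        rw [Finset.card_image_of_injective _ neg_injective]
    _ ≤ ((f - C (e : ℤ)).roots.toFinset ∪ (f - C (-(e : ℤ))).roots.toFinset).card := by
        apply Finset.card_le_card
        intro w hw
        simp only [Finset.mem_image, Finset.mem_filter] at hw
        obtain ⟨z, ⟨_, hz⟩, rfl⟩ := hw
        simp only [Finset.mem_union, Multiset.mem_toFinset, mem_roots (hne _), IsRoot.def, eval_sub,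
          eval_C]
        omega
    _ ≤ _ := Finset.card_union_le _ _
    _ ≤ _ := by
        have := hcard e
        have := hcard (-e)
        omega

lemma count_y (f : ℤ[X]) (hf : 2 ≤ f.natDegree) (h0 : ∀ z : ℤ, f.eval z ≠ 0)
    (k : ℕ) (hk : 1 ≤ k) (ε : ℝ) (hε : 0 < ε) : ∃ C : ℝ, 0 < C ∧
    ∀ n : ℕ, 1 ≤ n → ∀ x ∈ Fintype.piFinset (fun _ : Fin k => Finset.Icc (1 : ℤ) n),
    ((((Fintype.piFinset (fun _ : Fin k => Finset.Icc (1 : ℤ) n)).filter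
      (fun y => ∏ i, f.eval (- x i) = ∏ i, f.eval (- y i))).card : ℕ) : ℝ) ≤ C * (n : ℝ) ^ ε := by
  have hk0 : (0 : ℝ) < k := by exact_mod_cast hk
  set D := f.natDegree with hD
  have hD0 : (0 : ℝ) < D := by exact_mod_cast (by omega : 0 < D)
  set δ := ε / (D * k * k) with hδ
  have hδ0 : 0 < δ := by positivity
  obtain ⟨C, hC, hdiv⟩ := divisor_bound δ hδ0
  obtain ⟨B, hB, hup⟩ := poly_upper f
  refine ⟨(2 * D * (C * (B ^ k) ^ δ)) ^ k, by positivity, ?_⟩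
  intro n hn x hx
  have hn0 : (0 : ℝ) ≤ n := by positivity
  set P := (∏ i, f.eval (- x i)).natAbs with hP
  have hP0 : P ≠ 0 := by
    rw [hP, Int.natAbs_ne_zero, Finset.prod_ne_zero_iff]
    intro i _; exact h0 _
  simp only [Fintype.mem_piFinset, Finset.mem_Icc] at hx
  have hPB : (P : ℝ) ≤ B ^ k * (n : ℝ) ^ (D * k) := by
    rw [hP, ← Int.natAbsHom_apply, map_prod]
    push_cast
    calc _ ≤ ∏ i : Fin k, (B * (n : ℝ) ^ D) := by
          apply Finset.prod_le_prod
          · intros; positivity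
          · intro i _
            exact hup n (x i) (hx i).1 (hx i).2
      _ = _ := by simp [mul_pow, pow_mul]
  set S := (Finset.Icc (1 : ℤ) n).filter (fun z => (f.eval (-z)).natAbs ∈ P.divisors) with hS
  have hScard : S.card ≤ 2 * D * P.divisors.card := by
    apply Finset.card_le_mul_card_image_of_maps_to (f := fun z : ℤ => (f.eval (-z)).natAbs)
    · intro z hz
      exact (Finset.mem_filter.mp hz).2
    · intro e _
      exact fiber_poly f (by omega) _ _
  have h1 : (((Fintype.piFinset (fun _ : Fin k => Finset.Icc (1 : ℤ) n)).filter
      (fun y => ∏ i, f.eval (- x i) = ∏ i, f.eval (- y i))).card : ℕ) ≤ S.card ^ k := by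
    calc _ ≤ (Fintype.piFinset (fun _ : Fin k => S)).card := by
          apply Finset.card_le_card
          intro y hy
          simp only [Finset.mem_filter, Fintype.mem_piFinset] at hy ⊢
          intro i
          simp only [hS, Finset.mem_filter, Nat.mem_divisors]
          refine ⟨hy.1 i, ?_, hP0⟩
          rw [hP, hy.2, Int.natAbs_dvd_natAbs]
          exact Finset.dvd_prod_of_mem (fun i => f.eval (- y i)) (Finset.mem_univ i)
      _ = _ := by simp
  calc _ ≤ (S.card : ℝ) ^ k := by exact_mod_cast h1
    _ ≤ (2 * D * (P.divisors.card : ℝ)) ^ k := by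
        gcongr
        exact_mod_cast hScard
    _ ≤ (2 * D * (C * (B ^ k * (n : ℝ) ^ (D * k)) ^ δ)) ^ k := by
        gcongr
        exact (hdiv P hP0).trans (by gcongr)
    _ = _ := by
        rw [Real.mul_rpow (by positivity) (by positivity), ← mul_assoc C, ← mul_assoc, mul_pow]
        congr 1
        rw [← Real.rpow_natCast, ← Real.rpow_natCast, ← Real.rpow_mul hn0, ← Real.rpow_mul hn0]
        congr 1
        rw [hδ]
        push_cast
        field_simp

noncomputable def mbox (k n : ℕ) : Finset (Fin k → ℤ) := Fintype.piFinset (fun _ : Fin k => Finset.Icc (1 : ℤ) n)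

lemma mem_mbox {k n : ℕ} {x : Fin k → ℤ} : x ∈ mbox k n ↔ ∀ i, 1 ≤ x i ∧ x i ≤ n := by
  simp [mbox, Fintype.mem_piFinset]

noncomputable def dpoly {k : ℕ} (x y : Fin k → ℤ) : ℤ[X] :=
  ∏ i, (X + C (x i)) - ∏ i, (X + C (y i))

open Classical in
lemma count_W (f : ℤ[X]) (hf : 2 ≤ f.natDegree) (h0 : ∀ z : ℤ, f.eval z ≠ 0)
    (m : ℕ) (ε : ℝ) (hε : 0 < ε) : ∃ C : ℝ, 0 < C ∧
    ∀ n Y : ℕ, 1 ≤ Y → Y ≤ n → ∀ j : Fin (m + 2),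
    ((((mbox (m + 2) n ×ˢ mbox (m + 2) n).filter (fun p => f ∣ dpoly p.1 p.2 ∧ p.2 j = (Y : ℤ) ∧
      ∀ i, p.1 i < (Y : ℤ))).card : ℕ) : ℝ) ≤ C * (n : ℝ) ^ m * (n : ℝ) ^ ε := by
  obtain ⟨C1, hC1, h1⟩ := count_multiples (m + 2) (by omega) (ε / 2) (by positivity)
  obtain ⟨C2, hC2, h2⟩ := count_y f hf h0 (m + 2) (by omega) (ε / 2) (by positivity)
  obtain ⟨B, hB, h3⟩ := poly_lower f hf h0
  refine ⟨C1 * B * C2, by positivity, ?_⟩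
  intro n Y hY hYn j
  set W := (mbox (m + 2) n ×ˢ mbox (m + 2) n).filter (fun p => f ∣ dpoly p.1 p.2 ∧ p.2 j = (Y : ℤ) ∧
      ∀ i, p.1 i < (Y : ℤ)) with hW
  set M := (f.eval (-(Y : ℤ))).natAbs with hM
  have hM1 : 1 ≤ M := Int.natAbs_pos.mpr (h0 _)
  set U := (Fintype.piFinset (fun _ : Fin (m + 2) => Finset.Icc 1 Y)).filter
      (fun u => M ∣ ∏ i, u i) with hU
  have hmaps : ∀ p ∈ W, (fun i => ((Y : ℤ) - p.1 i).toNat) ∈ U := by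
    intro p hp
    simp only [hW, Finset.mem_filter, Finset.mem_product, mem_mbox] at hp
    obtain ⟨⟨hx, hy⟩, hd, hj, hlt⟩ := hp
    simp only [hU, Finset.mem_filter, Fintype.mem_piFinset, Finset.mem_Icc]
    refine ⟨fun i => ?_, ?_⟩
    · have := hlt i
      have := hx i
      omega
    · have hd2 := eval_dvd (x := -(Y : ℤ)) hd
      have h5 : ∏ i, (-(Y : ℤ) + p.2 i) = 0 :=
        Finset.prod_eq_zero (Finset.mem_univ j) (by rw [hj]; ring)
      simp only [dpoly, eval_sub, eval_prod, eval_add, eval_X, eval_C, h5, sub_zero] at hd2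
      have h6 := Int.natAbs_dvd_natAbs.mpr hd2
      rw [← hM, ← Int.natAbsHom_apply, map_prod] at h6
      convert h6 using 2 with i
      have := hlt i
      rw [Int.natAbsHom_apply]
      omega
  rw [Finset.card_eq_sum_card_fiberwise hmaps]
  push_cast
  have hfib : ∀ u ∈ U, (((W.filter (fun p => (fun i => ((Y : ℤ) - p.1 i).toNat) = u)).card : ℕ) : ℝ)
      ≤ C2 * (n : ℝ) ^ (ε / 2) := by
    intro u hu
    by_cases hx : (fun i => (Y : ℤ) - u i) ∈ mbox (m + 2) n
    · refine le_trans ?_ (h2 n (hY.trans hYn) _ hx)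
      rw [Nat.cast_le]
      have hX : ∀ p ∈ W.filter (fun p => (fun i => ((Y : ℤ) - p.1 i).toNat) = u),
          p.1 = (fun i => (Y : ℤ) - u i) := by
        intro p hp
        simp only [hW, Finset.mem_filter] at hp
        funext i
        have h7 := congrFun hp.2 i
        have := hp.1.2.2.2 i
        omega
      apply Finset.card_le_card_of_injOn (fun p => p.2)
      · intro p hp
        have hpx := hX p hp
        simp only [hW, Finset.coe_filter, Set.mem_ofPred_eq, Finset.mem_filter,
          Finset.mem_product] at hp ⊢
        refine ⟨hp.1.1.2, ?_⟩
        have := prod_eval_eq f p.1 p.2 hp.1.2.1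
        rw [hpx] at this
        exact this
      · intro p hp q hq hpq
        exact Prod.ext ((hX p hp).trans (hX q hq).symm) hpq
    · have : W.filter (fun p => (fun i => ((Y : ℤ) - p.1 i).toNat) = u) = ∅ := by
        apply Finset.filter_eq_empty_iff.mpr
        intro p hp hpu
        apply hx
        simp only [hW, Finset.mem_filter, Finset.mem_product] at hp
        convert hp.1.1 using 1
        funext i
        have h7 := congrFun hpu i
        have := hp.2.2.2 i
        omega
      rw [this]
      simp
      positivity
  have hn0 : (0 : ℝ) < n := by exact_mod_cast (by omega : 0 < n)
  calc _ ≤ ∑ u ∈ U, C2 * (n : ℝ) ^ (ε / 2) := Finset.sum_le_sum hfib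
    _ = (U.card : ℝ) * (C2 * (n : ℝ) ^ (ε / 2)) := by rw [Finset.sum_const, nsmul_eq_mul]
    _ ≤ (C1 * (B * (n : ℝ) ^ m) * (n : ℝ) ^ (ε / 2)) * (C2 * (n : ℝ) ^ (ε / 2)) := by
        gcongr
        refine (h1 Y M hY hM1).trans ?_
        have hMr : (0 : ℝ) < M := by exact_mod_cast hM1
        have hYr : (Y : ℝ) ≤ n := by exact_mod_cast hYn
        gcongr
        rw [div_le_iff₀ hMr, pow_add]
        calc (Y : ℝ) ^ m * (Y : ℝ) ^ 2 ≤ (n : ℝ) ^ m * (B * M) := by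
              gcongr
              exact h3 Y hY
          _ = _ := by ring
    _ = (C1 * B * C2) * (n : ℝ) ^ m * ((n : ℝ) ^ (ε / 2) * (n : ℝ) ^ (ε / 2)) := by ring
    _ = _ := by rw [← Real.rpow_add hn0]; ring_nf

open Classical in
lemma count_disj (f : ℤ[X]) (hf : 2 ≤ f.natDegree) (h0 : ∀ z : ℤ, f.eval z ≠ 0)
    (m : ℕ) (ε : ℝ) (hε : 0 < ε) : ∃ C : ℝ, 0 < C ∧ ∀ n : ℕ, 
    ((((mbox (m + 2) n ×ˢ mbox (m + 2) n).filter (fun p => f ∣ dpoly p.1 p.2 ∧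
      ∀ i j, p.1 i ≠ p.2 j)).card : ℕ) : ℝ) ≤ C * (n : ℝ) ^ (m + 1) * (n : ℝ) ^ ε := by
  obtain ⟨C, hC, hW⟩ := count_W f hf h0 m ε hε
  refine ⟨2 * (m + 2) * C, by positivity, ?_⟩
  intro n
  set W : Fin (m + 2) × ℕ → Finset ((Fin (m + 2) → ℤ) × (Fin (m + 2) → ℤ)) := fun a =>
    (mbox (m + 2) n ×ˢ mbox (m + 2) n).filter (fun p => f ∣ dpoly p.1 p.2 ∧ p.2 a.1 = a.2 ∧
      ∀ i, p.1 i < a.2) with hWdef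
  set T := (Finset.univ : Finset (Fin (m + 2))) ×ˢ Finset.Icc 1 n with hT
  have hsub : (mbox (m + 2) n ×ˢ mbox (m + 2) n).filter (fun p => f ∣ dpoly p.1 p.2 ∧
      ∀ i j, p.1 i ≠ p.2 j) ⊆ T.biUnion (fun a => W a ∪ (W a).image Prod.swap) := by
    intro p hp
    simp only [Finset.mem_filter, Finset.mem_product] at hp
    obtain ⟨⟨hx, hy⟩, hd, hne⟩ := hp
    obtain ⟨j, _, hj⟩ := Finset.exists_max_image Finset.univ p.2 ⟨0, Finset.mem_univ _⟩
    obtain ⟨i, _, hi⟩ := Finset.exists_max_image Finset.univ p.1 ⟨0, Finset.mem_univ _⟩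
    have hxb := mem_mbox.mp hx
    have hyb := mem_mbox.mp hy
    rw [Finset.mem_biUnion]
    rcases lt_or_gt_of_ne (hne i j) with h | h
    · refine ⟨(j, (p.2 j).toNat), ?_, ?_⟩
      · have := hyb j
        simp only [hT, Finset.mem_product, Finset.mem_univ, Finset.mem_Icc, true_and]
        omega
      · apply Finset.mem_union_left
        simp only [hWdef, Finset.mem_filter, Finset.mem_product]
        have := hyb j
        refine ⟨⟨hx, hy⟩, hd, by omega, fun l => ?_⟩
        have := hi l (Finset.mem_univ _)
        omega
    · refine ⟨(i, (p.1 i).toNat), ?_, ?_⟩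
      · have := hxb i
        simp only [hT, Finset.mem_product, Finset.mem_univ, Finset.mem_Icc, true_and]
        omega
      · apply Finset.mem_union_right
        rw [Finset.mem_image]
        refine ⟨p.swap, ?_, Prod.swap_swap p⟩
        simp only [hWdef, Finset.mem_filter, Finset.mem_product, Prod.fst_swap, Prod.snd_swap]
        have := hxb i
        refine ⟨⟨hy, hx⟩, ?_, by omega, fun l => ?_⟩
        · have : dpoly p.2 p.1 = - dpoly p.1 p.2 := by simp [dpoly]
          rw [this]; exact (dvd_neg).mpr hd
        have := hj l (Finset.mem_univ _)
        omega
  have hcard : ((((mbox (m + 2) n ×ˢ mbox (m + 2) n).filter (fun p => f ∣ dpoly p.1 p.2 ∧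
      ∀ i j, p.1 i ≠ p.2 j)).card : ℕ) : ℝ) ≤ ∑ a ∈ T, (2 * (C * (n : ℝ) ^ m * (n : ℝ) ^ ε)) := by
    calc _ ≤ (((∑ a ∈ T, (W a ∪ (W a).image Prod.swap).card) : ℕ) : ℝ) := by
          exact_mod_cast (Finset.card_le_card hsub).trans Finset.card_biUnion_le
      _ ≤ _ := by
          push_cast
          apply Finset.sum_le_sum
          intro a ha
          simp only [hT, Finset.mem_product, Finset.mem_univ, Finset.mem_Icc, true_and] at ha
          have h1 := hW n a.2 ha.1 ha.2 a.1
          have h2 : (W a ∪ (W a).image Prod.swap).card ≤ 2 * (W a).card := by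
            have := Finset.card_union_le (W a) ((W a).image Prod.swap)
            have := Finset.card_image_le (s := W a) (f := Prod.swap)
            omega
          calc (((W a ∪ (W a).image Prod.swap).card : ℕ) : ℝ) ≤ 2 * ((W a).card : ℝ) := by
                exact_mod_cast h2
            _ ≤ _ := by gcongr
  refine hcard.trans (le_of_eq ?_)
  rw [Finset.sum_const, nsmul_eq_mul, hT, Finset.card_product]
  simp
  ring

open Classical in
noncomputable def ndiag (θ : ℂ) (k n : ℕ) : Finset ((Fin k → ℤ) × (Fin k → ℤ)) :=
  (mbox k n ×ˢ mbox k n).filter (fun p =>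
    ∏ i, ((p.1 i : ℂ) + θ) = ∏ i, ((p.2 i : ℂ) + θ) ∧ dpoly p.1 p.2 ≠ 0)

lemma aeval_dpoly {k : ℕ} (θ : ℂ) (x y : Fin k → ℤ)
    (h : ∏ i, ((x i : ℂ) + θ) = ∏ i, ((y i : ℂ) + θ)) : aeval θ (dpoly x y) = 0 := by
  rw [dpoly, map_sub, map_prod, map_prod, sub_eq_zero]
  simp only [map_add, aeval_X, aeval_C]
  simp only [add_comm θ]
  simpa using h

open Classical in
lemma ndiag_coincide (θ : ℂ) (hθ : ∀ q : ℚ, θ ≠ (q : ℂ)) (k n : ℕ) (i j : Fin (k + 1)) :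
    ((ndiag θ (k + 1) n).filter (fun p => p.1 i = p.2 j)).card ≤ n * (ndiag θ k n).card := by
  have : n * (ndiag θ k n).card = (Finset.Icc (1 : ℤ) n ×ˢ ndiag θ k n).card := by
    rw [Finset.card_product]; simp
  rw [this]
  apply Finset.card_le_card_of_injOn
    (fun p => (p.1 i, (fun l => p.1 (i.succAbove l), fun l => p.2 (j.succAbove l))))
  · intro p hp
    simp only [ndiag, Finset.coe_filter, Finset.mem_filter, Finset.mem_product, mem_mbox,
      Set.mem_ofPred_eq, Finset.coe_product, Set.mem_prod, Finset.mem_coe, Finset.mem_Icc] at hp ⊢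
    obtain ⟨⟨⟨hx, hy⟩, heq, hne⟩, hij⟩ := hp
    refine ⟨hx i, ⟨fun l => hx _, fun l => hy _⟩, ?_, ?_⟩
    · rw [Fin.prod_univ_succAbove _ i, Fin.prod_univ_succAbove (fun l => (p.2 l : ℂ) + θ) j,
        hij] at heq
      refine mul_left_cancel₀ ?_ heq
      intro h0
      apply hθ (-(p.2 j))
      push_cast
      linear_combination h0
    · intro h0
      apply hne
      rw [dpoly, sub_eq_zero] at h0 ⊢
      rw [Fin.prod_univ_succAbove _ i, Fin.prod_univ_succAbove (fun l => X + C (p.2 l)) j, hij, h0]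
  · intro p hp q hq hpq
    simp only [Prod.mk.injEq] at hpq
    obtain ⟨h1, h2, h3⟩ := hpq
    simp only [Finset.coe_filter, Set.mem_ofPred_eq] at hp hq
    apply Prod.ext
    · funext l
      rcases Fin.eq_self_or_eq_succAbove i l with h | ⟨lb, h⟩
      · rw [h, h1]
      · rw [h]; exact congrFun h2 lb
    · funext l
      rcases Fin.eq_self_or_eq_succAbove j l with h | ⟨lb, h⟩
      · rw [h, ← hp.2, ← hq.2, h1]
      · rw [h]; exact congrFun h3 lb

open Classical in
lemma ndiag_succ (θ : ℂ) (hθ : ∀ q : ℚ, θ ≠ (q : ℂ)) (k n : ℕ) :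
    (ndiag θ (k + 1) n).card ≤ (k + 1) ^ 2 * (n * (ndiag θ k n).card) +
      ((ndiag θ (k + 1) n).filter (fun p => ∀ i j, p.1 i ≠ p.2 j)).card := by
  set T := (Finset.univ : Finset (Fin (k + 1) × Fin (k + 1))) with hT
  have hsub : ndiag θ (k + 1) n ⊆
      T.biUnion (fun a => (ndiag θ (k + 1) n).filter (fun p => p.1 a.1 = p.2 a.2)) ∪
      (ndiag θ (k + 1) n).filter (fun p => ∀ i j, p.1 i ≠ p.2 j) := by
    intro p hp
    by_cases h : ∀ i j, p.1 i ≠ p.2 j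
    · exact Finset.mem_union_right _ (Finset.mem_filter.mpr ⟨hp, h⟩)
    · push Not at h
      obtain ⟨i, j, h⟩ := h
      apply Finset.mem_union_left
      rw [Finset.mem_biUnion]
      exact ⟨(i, j), Finset.mem_univ _, Finset.mem_filter.mpr ⟨hp, h⟩⟩
  refine (Finset.card_le_card hsub).trans ((Finset.card_union_le _ _).trans ?_)
  gcongr
  refine Finset.card_biUnion_le.trans ?_
  calc _ ≤ ∑ a ∈ T, n * (ndiag θ k n).card :=
        Finset.sum_le_sum (fun a _ => ndiag_coincide θ hθ k n a.1 a.2)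
    _ = _ := by rw [Finset.sum_const, hT, Finset.card_univ, Fintype.card_prod, Fintype.card_fin, smul_eq_mul]; ring

open Classical in
lemma ndiag_bound_alg (θ : ℂ) (hθ : ∀ q : ℚ, θ ≠ (q : ℂ)) (ha : IsAlgebraic ℚ θ)
    (ε : ℝ) (hε : 0 < ε) (k : ℕ) : ∃ C : ℝ, 0 < C ∧ ∀ n : ℕ,
      (n : ℝ) * ((ndiag θ k n).card : ℝ) ≤ C * (n : ℝ) ^ k * (n : ℝ) ^ ε := by
  obtain ⟨f, hf, h0, hdvd⟩ := exists_poly θ hθ ha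
  induction k with
  | zero =>
    refine ⟨1, one_pos, fun n => ?_⟩
    have : ndiag θ 0 n = ∅ := by
      simp [ndiag, dpoly]
    rw [this]
    simp
    positivity
  | succ k ih =>
    obtain ⟨C, hC, ih⟩ := ih
    have hdisj : ∃ Cd : ℝ, 0 < Cd ∧ ∀ n : ℕ,
        ((((ndiag θ (k + 1) n).filter (fun p => ∀ i j, p.1 i ≠ p.2 j)).card : ℕ) : ℝ) ≤
          Cd * (n : ℝ) ^ k * (n : ℝ) ^ ε := by
      rcases k with _ | m
      · refine ⟨1, one_pos, fun n => ?_⟩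
        have : (ndiag θ (0 + 1) n).filter (fun p => ∀ i j, p.1 i ≠ p.2 j) = ∅ := by
          apply Finset.filter_eq_empty_iff.mpr
          intro p hp h
          simp only [ndiag, Finset.mem_filter] at hp
          have := hp.2.1
          simp at this
          exact h 0 0 this
        rw [this]
        simp
        positivity
      · obtain ⟨Cd, hCd, h⟩ := count_disj f hf h0 m ε hε
        refine ⟨Cd, hCd, fun n => le_trans ?_ (h n)⟩
        norm_cast
        apply Finset.card_le_card
        intro p hp
        simp only [ndiag, Finset.mem_filter] at hp ⊢
        exact ⟨hp.1.1, hdvd _ (aeval_dpoly θ _ _ hp.1.2.1), hp.2⟩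
    obtain ⟨Cd, hCd, hd⟩ := hdisj
    refine ⟨((k : ℝ) + 1) ^ 2 * C + Cd, by positivity, fun n => ?_⟩
    have h1 : ((ndiag θ (k + 1) n).card : ℝ) ≤ ((k : ℝ) + 1) ^ 2 * (n * ((ndiag θ k n).card : ℝ)) +
      ((((ndiag θ (k + 1) n).filter (fun p => ∀ i j, p.1 i ≠ p.2 j)).card : ℕ) : ℝ) := by
      exact_mod_cast ndiag_succ θ hθ k n
    calc (n : ℝ) * ((ndiag θ (k + 1) n).card : ℝ)
        ≤ n * (((k : ℝ) + 1) ^ 2 * (C * (n : ℝ) ^ k * (n : ℝ) ^ ε) +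
            Cd * (n : ℝ) ^ k * (n : ℝ) ^ ε) := by
          gcongr
          refine h1.trans ?_
          exact add_le_add (mul_le_mul_of_nonneg_left (ih n) (by positivity)) (hd n)
      _ = _ := by ring

lemma ndiag_bound (θ : ℂ) (hθ : ∀ q : ℚ, θ ≠ (q : ℂ))
    (ε : ℝ) (hε : 0 < ε) (k : ℕ) : ∃ C : ℝ, 0 < C ∧ ∀ n : ℕ,
      (n : ℝ) * ((ndiag θ k n).card : ℝ) ≤ C * (n : ℝ) ^ k * (n : ℝ) ^ ε := by
  by_cases ha : IsAlgebraic ℚ θ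
  · exact ndiag_bound_alg θ hθ ha ε hε k
  · refine ⟨1, one_pos, fun n => ?_⟩
    have : ndiag θ k n = ∅ := by
      apply Finset.filter_eq_empty_iff.mpr
      rintro p - ⟨h1, h2⟩
      apply ha
      have : IsAlgebraic ℤ θ := ⟨_, h2, aeval_dpoly θ _ _ h1⟩
      exact (IsFractionRing.isAlgebraic_iff ℤ ℚ ℂ).mp this
    rw [this]
    simp
    positivity

lemma diag_fiber {k : ℕ} (x : Fin k → ℤ) (s : Finset (Fin k → ℤ))
    (h : ∀ y ∈ s, dpoly x y = 0) : s.card ≤ k.factorial := by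
  classical
  have hroots : ∀ w : Fin k → ℤ, (∏ i, (X + C (w i))).roots =
      ((List.ofFn w : Multiset ℤ)).map (fun a => -a) := by
    intro w
    have h1 : (∏ i, (X + C (w i))) = ((((List.ofFn w : Multiset ℤ)).map (fun a => -a)).map
        (fun a => X - C a)).prod := by
      simp [List.prod_ofFn, List.map_ofFn, Function.comp_def]
    rw [h1, roots_multiset_prod_X_sub_C]
  calc s.card ≤ (List.ofFn x).permutations.toFinset.card := by
        apply Finset.card_le_card_of_injOn (fun y => List.ofFn y)
        · intro y hy
          simp only [Finset.mem_coe, List.mem_toFinset, List.mem_permutations]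
          have h1 := h y hy
          rw [dpoly, sub_eq_zero] at h1
          have h2 := congrArg roots h1
          rw [hroots, hroots] at h2
          have h3 := Multiset.map_injective neg_injective h2
          exact (Multiset.coe_eq_coe.mp h3).symm
        · intro y _ z _ hyz
          exact List.ofFn_injective hyz
    _ ≤ (List.ofFn x).permutations.length := List.toFinset_card_le _
    _ = _ := by simp [List.length_permutations]

open Classical in
noncomputable def sols (θ : ℂ) (k n : ℕ) : Finset ((Fin k → ℤ) × (Fin k → ℤ)) :=
  (mbox k n ×ˢ mbox k n).filter (fun p =>
    ∏ i, ((p.1 i : ℂ) + θ) = ∏ i, ((p.2 i : ℂ) + θ))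

lemma sols_upper (θ : ℂ) (k n : ℕ) :
    (sols θ k n).card ≤ k.factorial * n ^ k + (ndiag θ k n).card := by
  classical
  set D := (sols θ k n).filter (fun p => dpoly p.1 p.2 = 0) with hD
  have hsub : sols θ k n ⊆ D ∪ ndiag θ k n := by
    intro p hp
    by_cases h : dpoly p.1 p.2 = 0
    · exact Finset.mem_union_left _ (Finset.mem_filter.mpr ⟨hp, h⟩)
    · apply Finset.mem_union_right
      simp only [sols, ndiag, Finset.mem_filter] at hp ⊢
      exact ⟨hp.1, hp.2, h⟩
  refine (Finset.card_le_card hsub).trans ((Finset.card_union_le _ _).trans ?_)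
  gcongr
  have hb : (mbox k n).card = n ^ k := by simp [mbox]
  rw [← hb]
  apply Finset.card_le_mul_card_image_of_maps_to (f := fun p => p.1)
  · intro p hp
    simp only [hD, sols, Finset.mem_filter, Finset.mem_product] at hp
    exact hp.1.1.1
  · intro x hx
    calc _ = ((D.filter (fun p => p.1 = x)).image (fun p => p.2)).card := by
          rw [Finset.card_image_of_injOn]
          intro p hp q hq hpq
          simp only [Finset.coe_filter, Set.mem_ofPred_eq] at hp hq
          exact Prod.ext (hp.2.trans hq.2.symm) hpq
      _ ≤ _ := by
          apply diag_fiber x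
          intro y hy
          simp only [Finset.mem_image, Finset.mem_filter] at hy
          obtain ⟨p, ⟨hp, rfl⟩, rfl⟩ := hy
          exact (Finset.mem_filter.mp hp).2

lemma sols_lower (θ : ℂ) (k n : ℕ) :
    k.factorial * n.descFactorial k ≤ (sols θ k n).card := by
  classical
  have h1 : k.factorial * n.descFactorial k =
      (Finset.univ : Finset (Equiv.Perm (Fin k) × (Fin k ↪ Fin n))).card := by
    rw [Finset.card_univ, Fintype.card_prod, Fintype.card_perm, Fintype.card_embedding_eq]
    simp
  rw [h1]
  apply Finset.card_le_card_of_injOn (fun a =>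
    ((fun i => ((a.2 i : ℕ) : ℤ) + 1), (fun i => ((a.2 (a.1 i) : ℕ) : ℤ) + 1)))
  · intro a _
    simp only [sols, Finset.coe_filter, Set.mem_ofPred_eq, Finset.mem_product, mem_mbox]
    refine ⟨⟨fun i => ?_, fun i => ?_⟩, ?_⟩
    · have := (a.2 i).2; omega
    · have := (a.2 (a.1 i)).2; omega
    · exact (Equiv.prod_comp a.1 (fun i => ((((a.2 i : ℕ) : ℤ) + 1 : ℤ) : ℂ) + θ)).symm
  · rintro ⟨σ, e⟩ _ ⟨τ, g⟩ _ h
    simp only [Prod.mk.injEq] at h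
    obtain ⟨h2, h3⟩ := h
    have he : e = g := by
      ext i
      have := congrFun h2 i
      omega
    subst he
    have : σ = τ := by
      ext1 i
      apply e.injective
      ext
      have := congrFun h3 i
      omega
    rw [this]

lemma desc_bound (n k : ℕ) :
    (n : ℝ) * (n : ℝ) ^ k ≤ n * (n.descFactorial k : ℝ) + k ^ 2 * (n : ℝ) ^ k := by
  induction k with
  | zero => simp
  | succ k ih =>
    have h1 : (n : ℝ) * (n.descFactorial k : ℝ) - k * (n : ℝ) ^ k ≤ (n.descFactorial (k + 1) : ℝ) := by
      have h3 : (n.descFactorial k : ℝ) ≤ (n : ℝ) ^ k := by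
        exact_mod_cast Nat.descFactorial_le_pow n k
      have h2 : (n : ℝ) - k ≤ ((n - k : ℕ) : ℝ) := by
        rw [sub_le_iff_le_add]
        exact_mod_cast (by omega : n ≤ n - k + k)
      rw [Nat.descFactorial_succ]
      push_cast
      have h4 : ((n : ℝ) - k) * (n.descFactorial k : ℝ) ≤
        ((n - k : ℕ) : ℝ) * (n.descFactorial k : ℝ) := by gcongr
      have h5 : (k : ℝ) * (n.descFactorial k : ℝ) ≤ k * (n : ℝ) ^ k := by gcongr
      linarith
    have hn : (0 : ℝ) ≤ n := by positivity
    have h6 := mul_le_mul_of_nonneg_left ih hn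
    have h7 := mul_le_mul_of_nonneg_left h1 hn
    have h8 : (0 : ℝ) ≤ n * (n : ℝ) ^ k := by positivity
    have h9 : (0 : ℝ) ≤ k * (n * (n : ℝ) ^ k) := by positivity
    push_cast
    rw [pow_succ (n : ℝ)]
    nlinarith

end

/-- If `θ ∈ ℂ` is not rational, then for every `ε > 0` there is `C > 0` such that for all
`X ≥ 2` the number `N_k(X)` of solutions of `(x₁+θ)⋯(x_k+θ) = (y₁+θ)⋯(y_k+θ)` with
`1 ≤ x_i, y_i ≤ X` satisfies `|N_k(X) − k!·⌊X⌋^k| ≤ C·X^(k−1+ε)`. -/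
theorem asymptotic_formula_irrational (k : ℕ) (hk : 0 < k) (θ : ℂ)
    (hθ : ∀ q : ℚ, θ ≠ (q : ℂ)) (ε : ℝ) (hε : 0 < ε) :
    ∃ C : ℝ, 0 < C ∧ ∀ X : ℝ, 2 ≤ X →
      |({p : (Fin k → ℤ) × (Fin k → ℤ) |
          (∀ i, 1 ≤ p.1 i ∧ (p.1 i : ℝ) ≤ X) ∧ (∀ i, 1 ≤ p.2 i ∧ (p.2 i : ℝ) ≤ X) ∧
          ∏ i, ((p.1 i : ℂ) + θ) = ∏ i, ((p.2 i : ℂ) + θ)}.ncard : ℝ)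
          - (Nat.factorial k : ℝ) * (⌊X⌋ : ℝ) ^ k|
        ≤ C * X ^ ((k : ℝ) - 1 + ε) := by
  classical
  obtain ⟨C, hC, hnd⟩ := ndiag_bound θ hθ ε hε k
  refine ⟨C + k.factorial * k ^ 2, by positivity, ?_⟩
  intro X hX
  set n := ⌊X⌋₊ with hn
  have hfl : (⌊X⌋ : ℤ) = (n : ℤ) := (Int.natCast_floor_eq_floor (by linarith)).symm
  have hset : {p : (Fin k → ℤ) × (Fin k → ℤ) |
          (∀ i, 1 ≤ p.1 i ∧ (p.1 i : ℝ) ≤ X) ∧ (∀ i, 1 ≤ p.2 i ∧ (p.2 i : ℝ) ≤ X) ∧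
          ∏ i, ((p.1 i : ℂ) + θ) = ∏ i, ((p.2 i : ℂ) + θ)} = ↑(sols θ k n) := by
    ext p
    simp only [sols, Finset.coe_filter, Finset.mem_product, mem_mbox, Set.mem_ofPred_eq, ← hfl,
      Int.le_floor, and_assoc]
  rw [hset, Set.ncard_coe_finset, hfl, Int.cast_natCast]
  obtain ⟨j, rfl⟩ : ∃ j, k = j + 1 := ⟨k - 1, by omega⟩
  have hn1 : 1 ≤ n := by
    rw [hn, Nat.one_le_floor_iff]; linarith
  have hnr : (1 : ℝ) ≤ n := by exact_mod_cast hn1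
  have hn0 : (0 : ℝ) < n := by linarith
  have hE : ((ndiag θ (j + 1) n).card : ℝ) ≤ C * ((n : ℝ) ^ j * (n : ℝ) ^ ε) := by
    have := hnd n
    refine le_of_mul_le_mul_left ?_ hn0
    calc _ ≤ _ := this
      _ = _ := by ring
  have hdesc : (n : ℝ) ^ (j + 1) - ((j + 1 : ℕ) : ℝ) ^ 2 * ((n : ℝ) ^ j * (n : ℝ) ^ ε) ≤
      (n.descFactorial (j + 1) : ℝ) := by
    have h1 := desc_bound n (j + 1)
    have h2 : (1 : ℝ) ≤ (n : ℝ) ^ ε := Real.one_le_rpow hnr hε.le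
    have h3 : (n : ℝ) ^ (j + 1) ≤ (n.descFactorial (j + 1) : ℝ) +
        ((j + 1 : ℕ) : ℝ) ^ 2 * (n : ℝ) ^ j := by
      refine le_of_mul_le_mul_left ?_ hn0
      calc _ ≤ _ := h1
        _ = _ := by ring
    have h4 : (n : ℝ) ^ j * 1 ≤ (n : ℝ) ^ j * (n : ℝ) ^ ε := by gcongr
    have h5 : ((j + 1 : ℕ) : ℝ) ^ 2 * ((n : ℝ) ^ j * 1) ≤
      ((j + 1 : ℕ) : ℝ) ^ 2 * ((n : ℝ) ^ j * (n : ℝ) ^ ε) := by gcongr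
    linarith
  have hup : ((sols θ (j + 1) n).card : ℝ) ≤
      ((j + 1).factorial : ℝ) * (n : ℝ) ^ (j + 1) + ((ndiag θ (j + 1) n).card : ℝ) := by
    exact_mod_cast sols_upper θ (j + 1) n
  have hlo : ((j + 1).factorial : ℝ) * (n.descFactorial (j + 1) : ℝ) ≤
      ((sols θ (j + 1) n).card : ℝ) := by
    exact_mod_cast sols_lower θ (j + 1) n
  have hXn : (n : ℝ) ^ j * (n : ℝ) ^ ε ≤ X ^ (((j + 1 : ℕ) : ℝ) - 1 + ε) := by
    rw [← Real.rpow_natCast, ← Real.rpow_add hn0]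
    push_cast
    rw [add_sub_cancel_right]
    have : (n : ℝ) ≤ X := Nat.floor_le (by linarith)
    gcongr
  have hmul := mul_le_mul_of_nonneg_left hdesc (Nat.cast_nonneg (α := ℝ) (j + 1).factorial)
  have hpos : (0 : ℝ) ≤ (n : ℝ) ^ j * (n : ℝ) ^ ε := by positivity
  have hG : (0 : ℝ) ≤ ((j + 1).factorial : ℝ) * ((j + 1 : ℕ) : ℝ) ^ 2 *
    ((n : ℝ) ^ j * (n : ℝ) ^ ε) := by positivity
  have hCG : (0 : ℝ) ≤ C * ((n : ℝ) ^ j * (n : ℝ) ^ ε) := by positivity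
  calc _ ≤ (C + ((j + 1).factorial : ℝ) * ((j + 1 : ℕ) : ℝ) ^ 2) *
        ((n : ℝ) ^ j * (n : ℝ) ^ ε) := by
        rw [abs_le]
        constructor
        · nlinarith
        · nlinarith
    _ ≤ _ := by gcongr
end
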